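/- Let P be a polynomial with integer coefficients of degree r ≥ 2 whose coefficient of x^(r−1) is equal to zero, and let s be a nonzero integer. Then there exist a positive constant C and a threshold N_0, both depending only on P and s, such that for all integers N ≥ N_0, the number of integers n with N ≤ n < 2N for which there exists a positive integer x with s·n! = P(x) is at most C·N^(33/34). -/

import Mathlib

open scoped Nat Classical

/-!
If `s * n! = P(x)` and `s * (n + h)! = P(y)`, then, `P` being depressed, `y = α_h(n) * x` up to an
error `O(α_h(n) / x)`, where `α_h(z) = ((z + 1) ⋯ (z + h)) ^ (1 / r)`. If there are too many
solutions, then by pigeonhole the same `28` shifts `h_l`, all divisible by `r`, lead from many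
solutions `n` to further solutions `n + h_l`. For such shifts `α_{h_l}` is a power of `z` times a
function holomorphic at infinity, so Siegel's lemma yields integer polynomials `A_l` for which the
form `∑ A_l α_{h_l}` is extremely small for every large `z`. The operator
`r (z + 1) ⋯ (z + H) d/dz` turns forms into forms with integer coefficients, and by Cauchy's
estimates the iterates of the form are still small. Evaluating them at a solution `n` and replacing
`α_{h_l}(n)` by the quotient of the integers `x(n + h_l)` and `x(n)` gives integers of absolute
value less than `1`. Hence these integers vanish, so that the Wronskian of the form has a zero of
high order at every such `n`. It is a nonzero polynomial, because the logarithmic derivative of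
`α_h / α_l` has residue `1 / r` at `-h` for `l < h` and those of rational functions have integer
residues; its degree therefore bounds the number of such `n`.
-/

namespace PolynomialFactorial

open Polynomial Finset

section TwistedDerivations

variable {R A : Type*} [CommRing R] [CommRing A] [Algebra R A] (δ : Derivation R A A)

/-- The twisted derivation `a ↦ δ a + u * a`. If `α` satisfies `δ α = u * α`, then
`δ (a * α) = twist δ u a * α`, so it describes how `δ` acts on the coefficient of `α`. -/
def twist (u : A) : Module.End R A :=
  δ.toLinearMap + LinearMap.mulLeft R u

@[simp]
lemma twist_apply (u a : A) : twist δ u a = δ a + u * a := rfl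

lemma twist_pow_succ_apply (u a : A) (i : ℕ) :
    (twist δ u ^ (i + 1)) a = δ ((twist δ u ^ i) a) + u * (twist δ u ^ i) a := by
  rw [pow_succ', Module.End.mul_apply, twist_apply]

lemma twist_prod {ι : Type*} [DecidableEq ι] (s : Finset ι) (u a : ι → A) :
    twist δ (∑ i ∈ s, u i) (∏ i ∈ s, a i) =
      ∑ i ∈ s, twist δ (u i) (a i) * ∏ j ∈ s.erase i, a j := by
  induction s using Finset.induction_on with
  | empty => simp
  | insert i s hi ih =>
    have herase : ∀ j ∈ s, ∏ m ∈ (insert i s).erase j, a m = a i * ∏ m ∈ s.erase j, a m := by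
      intro j hj
      rw [erase_insert_of_ne (ne_of_mem_of_not_mem hj hi).symm,
        prod_insert (fun h ↦ hi (mem_of_mem_erase h))]
    calc twist δ (∑ j ∈ insert i s, u j) (∏ j ∈ insert i s, a j)
      _ = twist δ (u i) (a i) * ∏ j ∈ s, a j
          + a i * twist δ (∑ j ∈ s, u j) (∏ j ∈ s, a j) := by
        rw [sum_insert hi, prod_insert hi]
        simp only [twist_apply, Derivation.leibniz, smul_eq_mul]
        ring
      _ = _ := by
        rw [ih, sum_insert hi, erase_insert hi, mul_sum]
        congr 1
        refine sum_congr rfl fun j hj ↦ ?_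
        rw [herase j hj]
        ring

lemma sum_det_updateRow_twist {ι : Type*} [Fintype ι] [DecidableEq ι] (u : ι → A)
    (M : Matrix ι ι A) :
    ∑ i, (M.updateRow i fun l ↦ twist δ (u l) (M i l)).det = twist δ (∑ l, u l) M.det := by
  have hprod (σ : Equiv.Perm ι) (j : ι) :
      ∏ l, (M.updateRow (σ j) fun l ↦ twist δ (u l) (M (σ j) l)) (σ l) l =
        twist δ (u j) (M (σ j) j) * ∏ l ∈ univ.erase j, M (σ l) l := by
    rw [← mul_prod_erase univ _ (mem_univ j), Matrix.updateRow_self]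
    congr 1
    refine prod_congr rfl fun l hl ↦ ?_
    rw [Matrix.updateRow_ne (σ.injective.ne (ne_of_mem_erase hl))]
  simp only [Matrix.det_apply, map_sum, Units.smul_def, map_zsmul]
  rw [sum_comm]
  refine sum_congr rfl fun σ _ ↦ ?_
  rw [← smul_sum, twist_prod δ univ u fun l ↦ M (σ l) l, ← Equiv.sum_comp σ]
  simp only [hprod]

lemma sum_twist_mul_add_sum_mul_twist_neg {ι : Type*} [Fintype ι] (u a b : ι → A) :
    ∑ l, twist δ (u l) (a l) * b l + ∑ l, a l * twist δ (-u l) (b l) = δ (∑ l, a l * b l) := by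
  rw [← sum_add_distrib, map_sum]
  refine sum_congr rfl fun l _ ↦ ?_
  simp only [twist_apply, Derivation.leibniz, smul_eq_mul]
  ring

/-- The Wronskian-type matrix of the vector `a`: its row `i` is the twisted derivative of `a` of
order `e i`. -/
def twistMatrix {ι : Type*} (u a : ι → A) (e : ι → ℕ) : Matrix ι ι A :=
  Matrix.of fun i l ↦ (twist δ (u l) ^ e i) (a l)

lemma twist_det_twistMatrix {ι : Type*} [Fintype ι] [DecidableEq ι] (u a : ι → A) (e : ι → ℕ) :
    twist δ (∑ l, u l) (twistMatrix δ u a e).det =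
      ∑ i, (twistMatrix δ u a (Function.update e i (e i + 1))).det := by
  rw [← sum_det_updateRow_twist]
  refine sum_congr rfl fun i _ ↦ congrArg Matrix.det (Matrix.ext fun j l ↦ ?_)
  obtain rfl | hij := eq_or_ne j i
  · simp [twistMatrix, pow_succ']
  · simp [twistMatrix, hij]

/-- `u - v` is not the logarithmic derivative of a quotient `b / c` of nonzero elements
(written with cleared denominators). -/
def Nonresonant (u v : A) : Prop :=
  ∀ b c : A, b ≠ 0 → c ≠ 0 → c * δ b - b * δ c ≠ (u - v) * (b * c)

lemma Nonresonant.symm {u v : A} (h : Nonresonant δ u v) : Nonresonant δ v u :=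
  fun b c hb hc heq ↦ h c b hc hb (by linear_combination -heq)

lemma eq_zero_of_last_eq_zero [IsDomain A] {k : ℕ} {M : ℕ → Fin (k + 1) → A}
    (hM : (Matrix.of fun i l : Fin k ↦ M i l.castSucc).det ≠ 0) {b : Fin (k + 1) → A}
    (hlast : b (Fin.last k) = 0) (hb : ∀ i < k, ∑ l, M i l * b l = 0) : b = 0 := by
  have hinit : (fun l : Fin k ↦ b l.castSucc) = 0 := by
    refine Matrix.eq_zero_of_mulVec_eq_zero hM (funext fun i ↦ ?_)
    have := hb i i.isLt
    rw [Fin.sum_univ_castSucc, hlast, mul_zero, add_zero] at this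
    exact this
  exact funext (Fin.lastCases hlast (congrFun hinit))

theorem det_twistMatrix_ne_zero [IsDomain A] {k : ℕ} {u a : Fin k → A}
    (hu : Pairwise fun l m ↦ Nonresonant δ (u l) (u m)) (ha : ∀ l, a l ≠ 0) :
    (twistMatrix δ u a Fin.val).det ≠ 0 := by
  induction k with
  | zero => simp
  | succ k ih =>
    intro hdet
    let M (i : ℕ) (l : Fin (k + 1)) : A := (twist δ (u l) ^ i) (a l)
    have hM : (Matrix.of fun i l : Fin k ↦ M i l.castSucc).det ≠ 0 :=
      ih (fun _ _ hlm ↦ hu ((Fin.castSucc_injective k).ne hlm)) fun l ↦ ha l.castSucc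
    obtain ⟨b, hb0, hb⟩ := Matrix.exists_mulVec_eq_zero_iff.mpr hdet
    have hrel : ∀ i < k + 1, ∑ l, M i l * b l = 0 := fun i hi ↦ congrFun hb ⟨i, hi⟩
    have hlast : b (Fin.last k) ≠ 0 := fun h ↦
      hb0 (eq_zero_of_last_eq_zero hM h fun i hi ↦ hrel i (by lia))
    -- Differentiating the relations shows that `b'` satisfies all of them but the last one.
    let b' (l : Fin (k + 1)) : A := twist δ (-u l) (b l)
    have hrel' : ∀ i < k, ∑ l, M i l * b' l = 0 := by
      intro i hi
      have hδ := sum_twist_mul_add_sum_mul_twist_neg δ u (M i) b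
      have hnext : ∑ l, twist δ (u l) (M i l) * b l = 0 := by
        simpa only [M, twist_apply, twist_pow_succ_apply] using hrel (i + 1) (by lia)
      rwa [hnext, zero_add, hrel i (by lia), map_zero] at hδ
    have hprop : (fun l ↦ b (Fin.last k) * b' l - b' (Fin.last k) * b l) = 0 := by
      refine eq_zero_of_last_eq_zero hM (by ring) fun i hi ↦ ?_
      calc ∑ l, M i l * (b (Fin.last k) * b' l - b' (Fin.last k) * b l)
        _ = b (Fin.last k) * ∑ l, M i l * b' l - b' (Fin.last k) * ∑ l, M i l * b l := by
          rw [mul_sum, mul_sum, ← sum_sub_distrib]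
          exact sum_congr rfl fun l _ ↦ by ring
        _ = 0 := by rw [hrel' i hi, hrel i (by lia), mul_zero, mul_zero, sub_zero]
    obtain ⟨l, hl⟩ : ∃ l : Fin k, b l.castSucc ≠ 0 := by
      by_contra! hinit
      have h0 := hrel 0 k.succ_pos
      simp only [Fin.sum_univ_castSucc, hinit, mul_zero, sum_const_zero, zero_add] at h0
      exact mul_ne_zero (ha _) hlast h0
    refine hu (Fin.castSucc_lt_last l).ne _ _ hl hlast ?_
    have := congrFun hprop l.castSucc
    simp only [b', twist_apply, Pi.zero_apply] at this
    linear_combination this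

end TwistedDerivations

section PolynomialZeroEstimate

variable {R : Type*} [CommRing R]

lemma natDegree_twist_pow_le {q u a : R[X]} {H D : ℕ} (hq : q.natDegree ≤ H) (hu : u.natDegree ≤ H)
    (ha : a.natDegree ≤ D) (i : ℕ) :
    ((twist (q • derivative') u ^ i) a).natDegree ≤ D + i * H := by
  induction i with
  | zero => simpa using ha
  | succ i ih =>
    rw [twist_pow_succ_apply]
    change (q * derivative _ + _).natDegree ≤ _
    have hder := natDegree_derivative_le ((twist (q • derivative') u ^ i) a)
    refine natDegree_add_le_of_degree_le (natDegree_mul_le.trans ?_) (natDegree_mul_le.trans ?_)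
    all_goals rw [Nat.succ_mul]; lia

lemma natDegree_det_twistMatrix_le {k : ℕ} {q : R[X]} {u a : Fin k → R[X]} {H D : ℕ}
    (hq : q.natDegree ≤ H) (hu : ∀ l, (u l).natDegree ≤ H) (ha : ∀ l, (a l).natDegree ≤ D) :
    (twistMatrix (q • derivative') u a Fin.val).det.natDegree ≤ k * (D + k * H) := by
  rw [Matrix.det_apply]
  refine natDegree_sum_le_of_forall_le _ _ fun σ _ ↦ (natDegree_smul_le _ _).trans ?_
  have hentry (l : Fin k) :
      (twistMatrix (q • derivative') u a Fin.val (σ l) l).natDegree ≤ D + k * H :=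
    (natDegree_twist_pow_le hq (hu l) (ha l) _).trans (by gcongr; exact (σ l).isLt.le)
  calc _ ≤ ∑ l, (twistMatrix (q • derivative') u a Fin.val (σ l) l).natDegree :=
        natDegree_prod_le _ _
    _ ≤ ∑ _l : Fin k, (D + k * H) := sum_le_sum fun l _ ↦ hentry l
    _ = k * (D + k * H) := by simp

lemma exists_eq_pow_mul_of_ne_zero {B : R[X]} (hB : B ≠ 0) (x : R) :
    ∃ P : R[X], P.eval x ≠ 0 ∧ B = (X - C x) ^ B.rootMultiplicity x * P ∧
      (X - C x) * derivative B = (X - C x) ^ B.rootMultiplicity x *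
        ((B.rootMultiplicity x : R[X]) * P + (X - C x) * derivative P) := by
  obtain ⟨P, hBP, hP⟩ := exists_eq_pow_rootMultiplicity_mul_and_not_dvd B hB x
  refine ⟨P, fun h ↦ hP (dvd_iff_isRoot.mpr h), hBP, ?_⟩
  nth_rewrite 1 [hBP]
  rw [derivative_mul, derivative_X_sub_C_pow]
  cases B.rootMultiplicity x with
  | zero => simp
  | succ m =>
    simp only [pow_succ, Nat.add_sub_cancel, map_natCast]
    ring

variable [IsDomain R]

lemma card_mul_le_natDegree_of_pow_dvd {p : R[X]} (hp : p ≠ 0) {S : Finset R} {m : ℕ}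
    (hS : ∀ x ∈ S, (X - C x) ^ m ∣ p) : #S * m ≤ p.natDegree := by
  have hle : m • S.val ≤ p.roots := by
    refine Multiset.le_iff_count.mpr fun x ↦ ?_
    rw [Multiset.count_nsmul, count_roots]
    by_cases hx : x ∈ S
    · rw [Multiset.count_eq_one_of_mem S.nodup hx, mul_one, le_rootMultiplicity_iff hp]
      exact hS x hx
    · simp [Multiset.count_eq_zero_of_notMem hx]
  calc #S * m = (m • S.val).card := by simp [mul_comm]
    _ ≤ p.roots.card := Multiset.card_le_card hle
    _ ≤ p.natDegree := card_roots' p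

/-- The residue at `x` of the identity `w / ((X - x) g) = B' / B - D' / D`. -/
lemma eval_eq_of_logDeriv_eq {B D g w : R[X]} {x : R} (hB : B ≠ 0) (hD : D ≠ 0)
    (h : (X - C x) * g * (D * derivative B - B * derivative D) = w * (B * D)) :
    w.eval x = g.eval x * (B.rootMultiplicity x - D.rootMultiplicity x) := by
  obtain ⟨P, hP, hBP, hB'⟩ := exists_eq_pow_mul_of_ne_zero hB x
  obtain ⟨Q, hQ, hDQ, hD'⟩ := exists_eq_pow_mul_of_ne_zero hD x
  set m := B.rootMultiplicity x
  set n := D.rootMultiplicity x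
  have hcancel : g * (Q * ((m : R[X]) * P + (X - C x) * derivative P)
      - P * ((n : R[X]) * Q + (X - C x) * derivative Q)) = w * (P * Q) := by
    refine mul_left_cancel₀ (pow_ne_zero (m + n) (X_sub_C_ne_zero x)) ?_
    calc _ = g * (((X - C x) ^ n * Q) * ((X - C x) * derivative B)
          - ((X - C x) ^ m * P) * ((X - C x) * derivative D)) := by rw [hB', hD']; ring
      _ = w * (B * D) := by rw [← hBP, ← hDQ, ← h]; ring
      _ = _ := by conv_lhs => rw [hBP, hDQ]
                  ring
  have heval := congrArg (eval x) hcancel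
  simp only [eval_mul, eval_add, eval_sub, eval_natCast, eval_X, eval_C, sub_self, zero_mul,
    add_zero] at heval
  refine mul_right_cancel₀ (mul_ne_zero hP hQ) ?_
  linear_combination -heval

variable [CharZero R]

lemma pow_succ_dvd_of_pow_dvd_mul_derivative {q E : R[X]} {x : R} {s : ℕ} (hq : q.eval x ≠ 0)
    (hE : E.eval x = 0) (hdvd : (X - C x) ^ s ∣ q * derivative E) : (X - C x) ^ (s + 1) ∣ E := by
  obtain rfl | hE0 := eq_or_ne E 0
  · exact dvd_zero _
  have hq' : ¬ X - C x ∣ q := fun h ↦ hq (dvd_iff_isRoot.mp h)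
  have hdvd' := (prime_X_sub_C x).pow_dvd_of_dvd_mul_left s hq' hdvd
  have hE' : derivative E ≠ 0 := fun h ↦ by
    rw [eq_C_of_derivative_eq_zero h, eval_C] at hE
    exact hE0 (by rw [eq_C_of_derivative_eq_zero h, hE, C_0])
  rw [← le_rootMultiplicity_iff hE', derivative_rootMultiplicity_of_root hE] at hdvd'
  rw [← le_rootMultiplicity_iff hE0]
  have := (rootMultiplicity_pos hE0).mpr hE
  lia

lemma pow_dvd_det_twistMatrix {ι : Type*} [Fintype ι] [DecidableEq ι] {q : R[X]} {u a : ι → R[X]}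
    {x : R} {v : ι → R} {I : ℕ} (hq : q.eval x ≠ 0) (hv : v ≠ 0)
    (hrel : ∀ i ≤ I, ∑ l, ((twist (q • derivative') (u l) ^ i) (a l)).eval x * v l = 0)
    {s : ℕ} {e : ι → ℕ} (he : ∀ j, e j + s ≤ I + 1) :
    (X - C x) ^ s ∣ (twistMatrix (q • derivative') u a e).det := by
  induction s generalizing e with
  | zero => simp
  | succ s ih =>
    refine pow_succ_dvd_of_pow_dvd_mul_derivative hq ?_ ?_
    · rw [← coe_evalRingHom, RingHom.map_det]
      exact Matrix.exists_mulVec_eq_zero_iff.mp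
        ⟨v, hv, funext fun i ↦ hrel (e i) (by have := he i; lia)⟩
    · have hder := twist_det_twistMatrix (q • derivative') u a e
      rw [twist_apply, ← eq_sub_iff_add_eq] at hder
      change q * derivative _ = _ at hder
      rw [hder]
      refine dvd_sub (dvd_sum fun j _ ↦ ih fun m ↦ ?_)
        (Dvd.dvd.mul_left (ih fun j ↦ by have := he j; lia) _)
      have := he m
      obtain rfl | hmj := eq_or_ne m j
      · rw [Function.update_self]
        lia
      · rw [Function.update_of_ne hmj]
        lia

lemma card_mul_le_of_twist_relations_fin {k : ℕ} {q : R[X]} {u a : Fin k → R[X]} {S : Finset R}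
    {v : R → Fin k → R} {H D I : ℕ} (hq : q.natDegree ≤ H) (hu : ∀ l, (u l).natDegree ≤ H)
    (hres : Pairwise fun l m ↦ Nonresonant (q • derivative') (u l) (u m))
    (ha : ∀ l, (a l).natDegree ≤ D) (ha0 : ∀ l, a l ≠ 0) (hqS : ∀ x ∈ S, q.eval x ≠ 0)
    (hv : ∀ x ∈ S, v x ≠ 0)
    (hrel : ∀ x ∈ S, ∀ i ≤ I,
      ∑ l, ((twist (q • derivative') (u l) ^ i) (a l)).eval x * v x l = 0) :
    #S * (I + 1 - k) ≤ k * (D + k * H) := by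
  refine le_trans ?_ (natDegree_det_twistMatrix_le hq hu ha)
  refine card_mul_le_natDegree_of_pow_dvd (det_twistMatrix_ne_zero _ hres ha0) fun x hx ↦ ?_
  obtain hk | hk := le_or_gt k (I + 1)
  · exact pow_dvd_det_twistMatrix (hqS x hx) (hv x hx) (hrel x hx) fun j ↦ by lia
  · rw [Nat.sub_eq_zero_of_le hk.le, pow_zero]
    exact one_dvd _

theorem card_mul_le_of_twist_relations {ι : Type*} [Fintype ι] {q : R[X]} {u a : ι → R[X]}
    {S : Finset R} {v : R → ι → R} {H D I : ℕ} (hq : q.natDegree ≤ H)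
    (hu : ∀ l, (u l).natDegree ≤ H)
    (hres : Pairwise fun l m ↦ Nonresonant (q • derivative') (u l) (u m))
    (ha : ∀ l, (a l).natDegree ≤ D) (ha0 : a ≠ 0) (hqS : ∀ x ∈ S, q.eval x ≠ 0)
    (hv : ∀ x ∈ S, ∀ l, v x l ≠ 0)
    (hrel : ∀ x ∈ S, ∀ i ≤ I,
      ∑ l, ((twist (q • derivative') (u l) ^ i) (a l)).eval x * v x l = 0) :
    #S * (I + 1 - Fintype.card ι) ≤ Fintype.card ι * (D + Fintype.card ι * H) := by
  obtain ⟨l₀, hl₀⟩ := Function.ne_iff.mp ha0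
  let k := Fintype.card {l // a l ≠ 0}
  let g : Fin k ≃ {l // a l ≠ 0} := (Fintype.equivFin _).symm
  have hk : k ≤ Fintype.card ι := Fintype.card_subtype_le _
  have hsum (f : ι → R) (hf : ∀ l, a l = 0 → f l = 0) : ∑ j, f (g j) = ∑ l, f l := by
    rw [g.sum_comp fun l ↦ f l, ← sum_subtype {l | a l ≠ 0} (by simp)]
    exact sum_filter_of_ne fun l _ h ↦ mt (hf l) h
  have hsupp := card_mul_le_of_twist_relations_fin (S := S) (u := fun j ↦ u (g j))
    (a := fun j ↦ a (g j)) (v := fun x j ↦ v x (g j)) (I := I) hq (fun j ↦ hu _)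
    (fun i j hij ↦ hres (Subtype.val_injective.ne (g.injective.ne hij))) (fun j ↦ ha _)
    (fun j ↦ (g j).2) hqS
    (fun x hx ↦ Function.ne_iff.mpr ⟨g.symm ⟨l₀, hl₀⟩, hv x hx _⟩)
    fun x hx i hi ↦ (hsum (fun l ↦ ((twist (q • derivative') (u l) ^ i) (a l)).eval x * v x l)
      fun l hl ↦ by simp [hl]).trans (hrel x hx i hi)
  calc #S * (I + 1 - Fintype.card ι) ≤ #S * (I + 1 - k) := by gcongr
    _ ≤ k * (D + k * H) := hsupp
    _ ≤ _ := by gcongr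

end PolynomialZeroEstimate

section RootTwist

/-- The polynomial `(X + 1) ⋯ (X + H)`. -/
noncomputable def risingProd (H : ℕ) : ℤ[X] := ∏ j ∈ Icc 1 H, (X + C (j : ℤ))

/-- For `h ≤ H`, the numerator of the logarithmic derivative `∑_{j ≤ h} 1 / (X + j)` of
`risingProd h`, over the denominator `risingProd H`. -/
noncomputable def logDerivNum (H h : ℕ) : ℤ[X] :=
  ∑ j ∈ Icc 1 h, ∏ i ∈ (Icc 1 H).erase j, (X + C (i : ℤ))

/-- The derivation `r (X + 1) ⋯ (X + H) d/dX` of `ℤ[X]`. -/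
noncomputable def risingDerivation (r H : ℕ) : Derivation ℤ ℤ[X] ℤ[X] :=
  ((r : ℤ[X]) * risingProd H) • derivative'

/-- The action of `risingDerivation r H` on the coefficient of `((X + 1) ⋯ (X + h)) ^ (1 / r)`. -/
noncomputable def rootTwist (r H h : ℕ) : Module.End ℤ ℤ[X] :=
  twist (risingDerivation r H) (logDerivNum H h)

lemma rootTwist_pow_succ_apply (r H h : ℕ) (A : ℤ[X]) (i : ℕ) :
    (rootTwist r H h ^ (i + 1)) A = r * risingProd H * derivative ((rootTwist r H h ^ i) A)
      + logDerivNum H h * (rootTwist r H h ^ i) A :=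
  twist_pow_succ_apply _ _ _ _

lemma natDegree_prod_X_add_C_le (s : Finset ℕ) :
    (∏ j ∈ s, (X + C (j : ℤ))).natDegree ≤ #s :=
  (natDegree_prod_le _ _).trans (by
    simp only [natDegree_X_add_C, sum_const, smul_eq_mul, mul_one, le_refl])

lemma natDegree_risingProd_le (H : ℕ) : (risingProd H).natDegree ≤ H :=
  (natDegree_prod_X_add_C_le _).trans (by simp)

lemma natDegree_logDerivNum_le (H h : ℕ) : (logDerivNum H h).natDegree ≤ H :=
  natDegree_sum_le_of_forall_le _ _ fun _ _ ↦
    (natDegree_prod_X_add_C_le _).trans ((card_le_card (erase_subset _ _)).trans (by simp))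

lemma risingProd_eval_ne_zero {H : ℕ} (n : ℕ) : (risingProd H).eval (n : ℤ) ≠ 0 := by
  rw [risingProd, eval_prod, prod_ne_zero_iff]
  intro j hj
  simp only [mem_Icc, eval_add, eval_X, eval_C] at hj ⊢
  lia

lemma eval_neg_prod_X_add_C_eq_zero {s : Finset ℕ} {h : ℕ} (hs : h ∈ s) :
    (∏ j ∈ s, (X + C (j : ℤ))).eval (-(h : ℤ)) = 0 := by
  rw [eval_prod]
  exact prod_eq_zero hs (by simp)

lemma eval_neg_prod_X_add_C_ne_zero {s : Finset ℕ} {h : ℕ} (hs : h ∉ s) :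
    (∏ j ∈ s, (X + C (j : ℤ))).eval (-(h : ℤ)) ≠ 0 := by
  rw [eval_prod, prod_ne_zero_iff]
  rintro j hj
  simp only [eval_add, eval_X, eval_C]
  have : j ≠ h := ne_of_mem_of_not_mem hj hs
  lia

lemma logDerivNum_eval_neg_self {H h : ℕ} (hh : h ∈ Icc 1 H) :
    (logDerivNum H h).eval (-(h : ℤ)) =
      (∏ j ∈ (Icc 1 H).erase h, (X + C (j : ℤ))).eval (-(h : ℤ)) := by
  rw [logDerivNum, eval_finsetSum, sum_eq_single h]
  · exact fun j _ hjh ↦ eval_neg_prod_X_add_C_eq_zero (mem_erase.mpr ⟨hjh.symm, hh⟩)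
  · exact fun hnot ↦ absurd (by simpa using (mem_Icc.mp hh).1) hnot

lemma logDerivNum_eval_neg_of_lt {H h l : ℕ} (hh : h ∈ Icc 1 H) (hl : l < h) :
    (logDerivNum H l).eval (-(h : ℤ)) = 0 := by
  rw [logDerivNum, eval_finsetSum]
  refine sum_eq_zero fun j hj ↦ eval_neg_prod_X_add_C_eq_zero (mem_erase.mpr ⟨?_, hh⟩)
  have := (mem_Icc.mp hj).2
  lia

/-- The form `(logDerivNum H l - logDerivNum H h) / (r * risingProd H)` has residue `-1 / r` at
`-h`, whereas logarithmic derivatives of polynomials have integer residues. -/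
lemma nonresonant_logDerivNum_of_lt {r H h l : ℕ} (hr : 2 ≤ r) (hH : h ≤ H) (hl : l < h) :
    Nonresonant (risingDerivation r H) (logDerivNum H l) (logDerivNum H h) := by
  intro B D hB hD heq
  have hh : h ∈ Icc 1 H := mem_Icc.mpr ⟨by lia, hH⟩
  let cofactor : ℤ[X] := ∏ j ∈ (Icc 1 H).erase h, (X + C (j : ℤ))
  have hfactor : risingProd H = (X - C (-(h : ℤ))) * cofactor := by
    rw [risingProd, ← mul_prod_erase _ _ hh, C_neg, sub_neg_eq_add]
  have hres := eval_eq_of_logDeriv_eq hB hD (x := -(h : ℤ)) (g := (r : ℤ[X]) * cofactor)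
    (w := logDerivNum H l - logDerivNum H h) <| by
      rw [← heq]
      change _ = D * (r * risingProd H * derivative B) - B * (r * risingProd H * derivative D)
      rw [hfactor]
      ring
  simp only [eval_sub, eval_mul, eval_natCast, logDerivNum_eval_neg_of_lt hh hl,
    logDerivNum_eval_neg_self hh] at hres
  have hunit : (r : ℤ) * (D.rootMultiplicity (-(h : ℤ)) - B.rootMultiplicity (-(h : ℤ))) = 1 := by
    refine mul_left_cancel₀ (eval_neg_prod_X_add_C_ne_zero (notMem_erase h (Icc 1 H))) ?_
    linear_combination hres
  have := Int.le_of_dvd one_pos (Dvd.intro _ hunit)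
  lia

lemma nonresonant_logDerivNum {r H h l : ℕ} (hr : 2 ≤ r) (hH : h ≤ H) (hl : l ≤ H) (hne : h ≠ l) :
    Nonresonant (risingDerivation r H) (logDerivNum H h) (logDerivNum H l) := by
  obtain hlt | hlt := hne.lt_or_gt
  · exact nonresonant_logDerivNum_of_lt hr hl hlt
  · exact (nonresonant_logDerivNum_of_lt hr hH hlt).symm

theorem card_mul_le_of_rootTwist_relations {ι : Type*} [Fintype ι] {r H D I : ℕ} (hr : 2 ≤ r)
    {h : ι → ℕ} (hinj : Function.Injective h) (hH : ∀ l, h l ≤ H) {A : ι → ℤ[X]} (hA0 : A ≠ 0)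
    (hA : ∀ l, (A l).natDegree ≤ D) {S : Finset ℕ} {v : ℕ → ι → ℤ} (hv : ∀ n ∈ S, ∀ l, v n l ≠ 0)
    (hrel : ∀ n ∈ S, ∀ i ≤ I, ∑ l, ((rootTwist r H (h l) ^ i) (A l)).eval (n : ℤ) * v n l = 0) :
    #S * (I + 1 - Fintype.card ι) ≤ Fintype.card ι * (D + Fintype.card ι * H) := by
  have hdeg : ((r : ℤ[X]) * risingProd H).natDegree ≤ H :=
    natDegree_mul_le.trans (by simpa using natDegree_risingProd_le H)
  have := card_mul_le_of_twist_relations (S := S.map Nat.castEmbedding)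
    (q := (r : ℤ[X]) * risingProd H) (v := fun x ↦ v x.toNat) hdeg
    (fun l ↦ natDegree_logDerivNum_le H (h l))
    (fun l m hlm ↦ nonresonant_logDerivNum hr (hH l) (hH m) (hinj.ne hlm)) hA hA0
    (by simp [risingProd_eval_ne_zero]; lia) (by simpa using hv)
    (by simpa [rootTwist, risingDerivation] using hrel)
  rwa [card_map] at this

end RootTwist

section CauchyEstimates

variable {E : Type*} [NormedAddCommGroup E] [NormedSpace ℂ E]

lemma norm_smul_deriv_le {f : ℂ → E} {a z : ℂ} {η B Q : ℝ} (hη : 0 < η)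
    (hf : ∀ y ∈ Metric.closedBall z η, DifferentiableAt ℂ f y)
    (hB : ∀ y ∈ Metric.closedBall z η, ‖f y‖ ≤ B) (ha : ‖a‖ ≤ Q) :
    ‖a • deriv f z‖ ≤ Q * (B / η) := by
  have hcont : DiffContOnCl ℂ f (Metric.ball z η) := by
    refine DifferentiableOn.diffContOnCl fun y hy ↦ ?_
    rw [closure_ball _ hη.ne'] at hy
    exact (hf y hy).differentiableWithinAt
  rw [norm_smul]
  gcongr
  · exact (norm_nonneg _).trans ha
  · exact Complex.norm_deriv_le_of_forall_mem_sphere_norm_le hη hcont fun y hy ↦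
      hB y (Metric.sphere_subset_closedBall hy)

theorem norm_iterate_le_of_eq_smul_deriv {F : ℕ → ℂ → E} {q : ℂ → ℂ} {c : ℂ} {ρ M Q : ℝ}
    (hρ : 0 < ρ)
    (hdiff : ∀ i, ∀ z ∈ Metric.closedBall c ρ, DifferentiableAt ℂ (F i) z)
    (hF : ∀ i, ∀ z ∈ Metric.closedBall c ρ, F (i + 1) z = q z • deriv (F i) z)
    (hq : ∀ z ∈ Metric.closedBall c ρ, ‖q z‖ ≤ Q) (hM : ∀ z ∈ Metric.closedBall c ρ, ‖F 0 z‖ ≤ M)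
    (i : ℕ) : ‖F i c‖ ≤ M * (Q * i / ρ) ^ i := by
  obtain rfl | hi := Nat.eq_zero_or_pos i
  · simpa using hM c (Metric.mem_closedBall_self hρ.le)
  -- One derivative is taken at the expense of shrinking the radius by `ρ / i`.
  let η : ℝ := ρ / i
  have hη : 0 < η := by positivity
  have hshrink (j : ℕ) (hj : j ≤ i) :
      ∀ z ∈ Metric.closedBall c (ρ - j * η), ‖F j z‖ ≤ M * (Q * i / ρ) ^ j := by
    induction j with
    | zero => simpa using hM
    | succ j ih =>
      intro z hz
      push_cast [Metric.mem_closedBall] at hz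
      have hjη : 0 ≤ j * η := by positivity
      have hsub : Metric.closedBall z η ⊆ Metric.closedBall c (ρ - j * η) :=
        Metric.closedBall_subset_closedBall' (by linarith)
      have hball : Metric.closedBall z η ⊆ Metric.closedBall c ρ :=
        hsub.trans (Metric.closedBall_subset_closedBall (by linarith))
      have hzc : z ∈ Metric.closedBall c ρ := hball (Metric.mem_closedBall_self hη.le)
      calc ‖F (j + 1) z‖ = ‖q z • deriv (F j) z‖ := by rw [hF j z hzc]
        _ ≤ Q * (M * (Q * i / ρ) ^ j / η) :=
          norm_smul_deriv_le hη (fun y hy ↦ hdiff j y (hball hy))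
            (fun y hy ↦ ih (by lia) y (hsub hy)) (hq z hzc)
        _ = M * (Q * i / ρ) ^ (j + 1) := by
          simp only [η, pow_succ]
          field_simp
  refine hshrink i le_rfl c (Metric.mem_closedBall_self ?_)
  simp only [η]
  field_simp
  simp

end CauchyEstimates

section RisingRoot

/-- The function `((z + 1) ⋯ (z + h)) ^ (1 / r)`, holomorphic on the right half plane. -/
noncomputable def risingRoot (r h : ℕ) (z : ℂ) : ℂ := ∏ j ∈ Icc 1 h, (z + j) ^ (r : ℂ)⁻¹

/-- The `r`-th root of `(n + h)! / n! = (n + 1) ⋯ (n + h)`. -/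
noncomputable def factorialRoot (r h n : ℕ) : ℝ := ((n + 1).ascFactorial h : ℝ) ^ (r : ℝ)⁻¹

lemma factorialRoot_pow_mul_factorial {r : ℕ} (hr : r ≠ 0) (h n : ℕ) :
    factorialRoot r h n ^ r * n ! = (n + h)! := by
  rw [factorialRoot, Real.rpow_inv_natCast_pow (by positivity) hr, mul_comm]
  exact_mod_cast Nat.factorial_mul_ascFactorial n h

lemma one_le_factorialRoot (r h n : ℕ) : 1 ≤ factorialRoot r h n :=
  Real.one_le_rpow (by exact_mod_cast Nat.ascFactorial_pos _ _) (by positivity)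

lemma ascFactorial_succ_eq_prod_Icc (n h : ℕ) :
    (n + 1).ascFactorial h = ∏ j ∈ Icc 1 h, (n + j) := by
  induction h with
  | zero => simp
  | succ h ih =>
    rw [Nat.ascFactorial_succ, ih, prod_Icc_succ_top (by lia)]
    ring

lemma risingRoot_natCast (r h n : ℕ) : risingRoot r h n = factorialRoot r h n := by
  rw [factorialRoot, ascFactorial_succ_eq_prod_Icc, Nat.cast_prod,
    ← Real.finsetProd_rpow _ _ (fun _ _ ↦ by positivity), Complex.ofReal_prod, risingRoot]
  refine prod_congr rfl fun j _ ↦ ?_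
  rw [Complex.ofReal_cpow (by positivity)]
  push_cast
  rfl

lemma add_natCast_mem_slitPlane {z : ℂ} (hz : 0 < z.re) (j : ℕ) : z + j ∈ Complex.slitPlane :=
  Or.inl (by simpa using add_pos_of_pos_of_nonneg hz j.cast_nonneg)

lemma hasDerivAt_risingRoot (r h : ℕ) {z : ℂ} (hz : 0 < z.re) :
    HasDerivAt (risingRoot r h) (risingRoot r h z * ∑ j ∈ Icc 1 h, (r : ℂ)⁻¹ * (z + j)⁻¹) z := by
  have hfactor (j : ℕ) : HasDerivAt (fun z : ℂ ↦ (z + j) ^ (r : ℂ)⁻¹)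
      ((z + j) ^ (r : ℂ)⁻¹ * ((r : ℂ)⁻¹ * (z + j)⁻¹)) z := by
    have hj := add_natCast_mem_slitPlane hz j
    convert! ((hasDerivAt_id z).add_const (j : ℂ)).cpow_const (c := (r : ℂ)⁻¹) hj using 1
    rw [id, Complex.cpow_sub _ _ (Complex.slitPlane_ne_zero hj), Complex.cpow_one]
    ring
  refine (HasDerivAt.fun_finsetProd fun j _ ↦ hfactor j).congr_deriv ?_
  rw [mul_sum]
  refine sum_congr rfl fun j hj ↦ ?_
  rw [risingRoot, ← prod_erase_mul _ _ hj, smul_eq_mul]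
  ring

lemma aeval_risingProd_mul_sum {H h : ℕ} (hH : h ≤ H) {z : ℂ} (hz : 0 < z.re) :
    aeval z (risingProd H) * ∑ j ∈ Icc 1 h, (z + j)⁻¹ = aeval z (logDerivNum H h) := by
  rw [logDerivNum, map_sum, mul_sum]
  refine sum_congr rfl fun j hj ↦ ?_
  have hjH : j ∈ Icc 1 H := Icc_subset_Icc_right hH hj
  have hne := Complex.slitPlane_ne_zero (add_natCast_mem_slitPlane hz j)
  rw [risingProd, ← prod_erase_mul _ _ hjH, map_mul]
  simp [hne]

lemma mul_deriv_risingRoot {r H h : ℕ} (hr : r ≠ 0) (hH : h ≤ H) {z : ℂ} (hz : 0 < z.re) :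
    r * aeval z (risingProd H) * deriv (risingRoot r h) z =
      aeval z (logDerivNum H h) * risingRoot r h z := by
  have hr' : (r : ℂ) ≠ 0 := by exact_mod_cast hr
  rw [(hasDerivAt_risingRoot r h hz).deriv, ← aeval_risingProd_mul_sum hH hz, ← mul_sum]
  field_simp

/-- The function `∑ₗ (δ ^ i Aₗ) α_{hₗ}`, where `δ = rootTwist r H hₗ` and `α_h = risingRoot r h`,
obtained from `∑ₗ Aₗ α_{hₗ}` by applying `r (z + 1) ⋯ (z + H) d/dz` `i` times. -/
noncomputable def rootForm {ι : Type*} [Fintype ι] (r H : ℕ) (h : ι → ℕ) (A : ι → ℤ[X]) (i : ℕ)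
    (z : ℂ) : ℂ :=
  ∑ l, aeval z ((rootTwist r H (h l) ^ i) (A l)) * risingRoot r (h l) z

lemma rootForm_natCast {ι : Type*} [Fintype ι] (r H : ℕ) (h : ι → ℕ) (A : ι → ℤ[X])
    (i n : ℕ) :
    rootForm r H h A i n =
      ((∑ l, ((((rootTwist r H (h l) ^ i) (A l)).eval (n : ℤ) : ℤ) : ℝ) *
        factorialRoot r (h l) n : ℝ) : ℂ) := by
  rw [rootForm, Complex.ofReal_sum]
  refine sum_congr rfl fun l _ ↦ ?_
  have haeval : aeval (n : ℂ) ((rootTwist r H (h l) ^ i) (A l)) =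
      ((((rootTwist r H (h l) ^ i) (A l)).eval (n : ℤ) : ℤ) : ℂ) := by
    simpa using aeval_algebraMap_apply ℂ (n : ℤ) ((rootTwist r H (h l) ^ i) (A l))
  rw [haeval, risingRoot_natCast]
  push_cast
  rfl

section RootFormBounds

variable {ι : Type*} [Fintype ι] {r H : ℕ} {h : ι → ℕ} {A : ι → ℤ[X]}

lemma differentiableAt_rootForm {z : ℂ} (hz : 0 < z.re) (i : ℕ) :
    DifferentiableAt ℂ (rootForm r H h A i) z :=
  DifferentiableAt.fun_sum fun l _ ↦
    (Polynomial.differentiableAt_aeval _).mul (hasDerivAt_risingRoot r (h l) hz).differentiableAt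

lemma rootForm_succ (hr : r ≠ 0) (hH : ∀ l, h l ≤ H) {z : ℂ} (hz : 0 < z.re) (i : ℕ) :
    rootForm r H h A (i + 1) z = (r * aeval z (risingProd H)) • deriv (rootForm r H h A i) z := by
  have hderiv : deriv (rootForm r H h A i) z =
      ∑ l, (aeval z (derivative ((rootTwist r H (h l) ^ i) (A l))) * risingRoot r (h l) z
        + aeval z ((rootTwist r H (h l) ^ i) (A l)) * deriv (risingRoot r (h l)) z) :=
    (HasDerivAt.fun_sum fun l _ ↦ (Polynomial.hasDerivAt_aeval _ z).mul
      (hasDerivAt_risingRoot r (h l) hz).differentiableAt.hasDerivAt).deriv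
  rw [hderiv, smul_eq_mul, mul_sum, rootForm]
  refine sum_congr rfl fun l _ ↦ ?_
  rw [rootTwist_pow_succ_apply, map_add, map_mul, map_mul, map_mul, map_natCast]
  linear_combination -aeval z ((rootTwist r H (h l) ^ i) (A l)) * mul_deriv_risingRoot hr (hH l) hz

lemma re_pos_of_mem_closedBall {n : ℕ} (hn : 0 < n) {z : ℂ}
    (hz : z ∈ Metric.closedBall (n : ℂ) (n / 2)) : 0 < z.re := by
  have hre := (Complex.abs_re_le_norm (z - n)).trans (mem_closedBall_iff_norm.mp hz)
  have hn' : (0 : ℝ) < n := by exact_mod_cast hn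
  rw [Complex.sub_re, Complex.natCast_re, abs_le] at hre
  linarith

lemma norm_aeval_risingProd_le {n : ℕ} (hn : 2 * H ≤ n) {z : ℂ}
    (hz : z ∈ Metric.closedBall (n : ℂ) (n / 2)) :
    ‖aeval z (risingProd H)‖ ≤ (2 * n : ℝ) ^ H := by
  have hzn : ‖z‖ ≤ n + n / 2 := by
    simpa using norm_le_norm_add_const_of_dist_le (Metric.mem_closedBall.mp hz)
  have hfactor : ∀ j ∈ Icc 1 H, ‖z + j‖ ≤ 2 * n := by
    intro j hj
    have hj' : (2 * j : ℝ) ≤ n := by exact_mod_cast (by have := (mem_Icc.mp hj).2; lia : 2 * j ≤ n)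
    calc ‖z + j‖ ≤ ‖z‖ + j := by simpa using norm_add_le z j
      _ ≤ 2 * n := by linarith
  calc ‖aeval z (risingProd H)‖ = ∏ j ∈ Icc 1 H, ‖z + j‖ := by simp [risingProd]
    _ ≤ ∏ _j ∈ Icc 1 H, (2 * n : ℝ) := prod_le_prod (fun _ _ ↦ norm_nonneg _) hfactor
    _ = (2 * n : ℝ) ^ H := by simp

theorem norm_rootForm_le (hr : r ≠ 0) (hH : ∀ l, h l ≤ H) {n : ℕ} (hn0 : 0 < n) (hn : 2 * H ≤ n)
    {M : ℝ} (hM : ∀ z ∈ Metric.closedBall (n : ℂ) (n / 2), ‖rootForm r H h A 0 z‖ ≤ M) (i : ℕ) :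
    ‖rootForm r H h A i n‖ ≤ M * (r * (2 * n) ^ H * i / (n / 2)) ^ i := by
  refine norm_iterate_le_of_eq_smul_deriv (by positivity)
    (fun i z hz ↦ differentiableAt_rootForm (re_pos_of_mem_closedBall hn0 hz) i)
    (fun i z hz ↦ rootForm_succ hr hH (re_pos_of_mem_closedBall hn0 hz) i) (fun z hz ↦ ?_) hM i
  rw [norm_mul, Complex.norm_natCast]
  gcongr
  exact norm_aeval_risingProd_le hn hz

end RootFormBounds

end RisingRoot

section SiegelLemma

lemma norm_sum_mul_le {E S : Type*} [Fintype E] [NonUnitalSeminormedRing S] {a f : E → S}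
    {B G : ℝ} (ha : ∀ e, ‖a e‖ ≤ B) (hf : ∀ e, ‖f e‖ ≤ G) :
    ‖∑ e, a e * f e‖ ≤ Fintype.card E * (B * G) := by
  refine (norm_sum_le_of_le (n := fun _ ↦ B * G) _ fun e _ ↦ (norm_mul_le _ _).trans ?_).trans_eq
    (by simp)
  exact mul_le_mul (ha e) (hf e) (norm_nonneg _) ((norm_nonneg _).trans (ha e))

lemma floor_mem_Icc_of_abs_le {t : ℝ} {Z : ℤ} (ht : |t| ≤ Z) : ⌊t⌋ ∈ Icc (-Z) Z := by
  rw [abs_le] at ht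
  refine mem_Icc.mpr ⟨Int.le_floor.mpr (by exact_mod_cast ht.1), ?_⟩
  exact_mod_cast (Int.floor_le t).trans ht.2

theorem exists_int_ne_zero_abs_sum_mul_le {E κ : Type*} [Fintype E] [Fintype κ] {B Z : ℕ}
    {γ : E → κ → ℝ} {G τ : ℝ} (hτ : 0 < τ) (hγ : ∀ e j, |γ e j| ≤ G)
    (hZ : Fintype.card E * (B * G) / τ ≤ Z)
    (hcard : (2 * Z + 1) ^ Fintype.card κ < (B + 1) ^ Fintype.card E) :
    ∃ a : E → ℤ, a ≠ 0 ∧ (∀ e, |a e| ≤ B) ∧ ∀ j, |∑ e, a e * γ e j| ≤ τ := by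
  let cell (a : E → Fin (B + 1)) (j : κ) : ℤ := ⌊(∑ e, (a e : ℕ) * γ e j) / τ⌋
  let cells : Finset (κ → ℤ) := Fintype.piFinset fun _ ↦ Icc (-(Z : ℤ)) Z
  have hmaps : ∀ a ∈ univ, cell a ∈ cells := by
    refine fun a _ ↦ Fintype.mem_piFinset.mpr fun j ↦ floor_mem_Icc_of_abs_le ?_
    have ha (e : E) : ‖((a e : ℕ) : ℝ)‖ ≤ B := by
      rw [Real.norm_natCast]
      exact_mod_cast Nat.lt_succ_iff.mp (a e).2
    rw [abs_div, abs_of_pos hτ]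
    exact (div_le_div_of_nonneg_right (norm_sum_mul_le ha fun e ↦ hγ e j) hτ.le).trans hZ
  have hcells : #cells < #(univ : Finset (E → Fin (B + 1))) := by
    have hIcc : #(Icc (-(Z : ℤ)) Z) = 2 * Z + 1 := by
      rw [Int.card_Icc]
      lia
    simpa [cells, hIcc, -Int.card_Icc] using hcard
  obtain ⟨a, _, b, _, hab, hcell⟩ := exists_ne_map_eq_of_card_lt_of_maps_to hcells hmaps
  refine ⟨fun e ↦ (a e : ℤ) - b e, fun h0 ↦ hab ?_, fun e ↦ ?_, fun j ↦ ?_⟩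
  · ext e
    have := congrFun h0 e
    simp only [Pi.zero_apply] at this
    lia
  · have := (a e).2
    have := (b e).2
    rw [abs_le]
    lia
  · have hlt := Int.abs_sub_lt_one_of_floor_eq_floor (congrFun hcell j)
    rw [← sub_div, abs_div, abs_of_pos hτ, div_lt_one hτ, ← sum_sub_distrib] at hlt
    refine hlt.le.trans_eq' ?_
    push_cast
    simp only [sub_mul]

lemma inv_factorial_mul_norm_iteratedDeriv_le {F : Type*} [NormedAddCommGroup F] [NormedSpace ℂ F]
    [CompleteSpace F] {f : ℂ → F} {c : ℂ} {R ρ G : ℝ} (hR : 0 < R) (hρ : 0 ≤ ρ)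
    (hf : DiffContOnCl ℂ f (Metric.ball c R)) (hG : ∀ z ∈ Metric.sphere c R, ‖f z‖ ≤ G) (j : ℕ) :
    (j ! : ℝ)⁻¹ * ρ ^ j * ‖iteratedDeriv j f c‖ ≤ G * (ρ / R) ^ j := by
  calc (j ! : ℝ)⁻¹ * ρ ^ j * ‖iteratedDeriv j f c‖
      ≤ (j ! : ℝ)⁻¹ * ρ ^ j * (j ! * G / R ^ j) := by
        gcongr
        exact Complex.norm_iteratedDeriv_le_of_forall_mem_sphere_norm_le j hR hf hG
    _ = G * (ρ / R) ^ j := by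
        rw [div_pow]
        field_simp

theorem norm_le_of_norm_iteratedDeriv_le {F : Type*} [NormedAddCommGroup F] [NormedSpace ℂ F]
    [CompleteSpace F] {f : ℂ → F} {c w : ℂ} {R ρ G τ : ℝ} {K : ℕ} (hR : 0 < R) (hρR : ρ ≤ R / 2)
    (hf : DiffContOnCl ℂ f (Metric.ball c R)) (hG : ∀ z ∈ Metric.sphere c R, ‖f z‖ ≤ G)
    (hτ : ∀ j < K, (j ! : ℝ)⁻¹ * ρ ^ j * ‖iteratedDeriv j f c‖ ≤ τ)
    (hw : w ∈ Metric.closedBall c ρ) : ‖f w‖ ≤ K * τ + 2 * G * (ρ / R) ^ K := by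
  have hρ : 0 ≤ ρ := dist_nonneg.trans (Metric.mem_closedBall.mp hw)
  have hq : ρ / R ≤ 1 / 2 := by
    rw [div_le_iff₀ hR]
    linarith
  have hG0 : 0 ≤ G :=
    (norm_nonneg _).trans (hG (c + R) (by simp [abs_of_pos hR]))
  let t (j : ℕ) : F := (j ! : ℂ)⁻¹ • (w - c) ^ j • iteratedDeriv j f c
  have hsum : HasSum t (f w) :=
    Complex.hasSum_taylorSeries_on_ball hf.differentiableOn
      (Metric.closedBall_subset_ball (by linarith) hw)
  have hterm (j : ℕ) : ‖t j‖ ≤ (j ! : ℝ)⁻¹ * ρ ^ j * ‖iteratedDeriv j f c‖ := by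
    rw [norm_smul, norm_smul, norm_inv, norm_pow, Complex.norm_natCast, mul_assoc]
    gcongr
    exact mem_closedBall_iff_norm.mp hw
  have hgeom (j : ℕ) : ‖t j‖ ≤ G * (ρ / R) ^ j :=
    (hterm j).trans (inv_factorial_mul_norm_iteratedDeriv_le hR hρ hf hG j)
  have htail : ‖∑' j, t (j + K)‖ ≤ 2 * G * (ρ / R) ^ K := by
    have hgeo := (hasSum_geometric_of_lt_one (by positivity : 0 ≤ ρ / R) (by linarith)).mul_left
      (G * (ρ / R) ^ K)
    refine (tsum_of_norm_bounded hgeo fun j ↦ (hgeom (j + K)).trans_eq (by ring)).trans ?_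
    have hinv : (1 - ρ / R)⁻¹ ≤ 2 := by
      rw [inv_le_comm₀ (by linarith) two_pos]
      linarith
    calc G * (ρ / R) ^ K * (1 - ρ / R)⁻¹ ≤ G * (ρ / R) ^ K * 2 := by gcongr
      _ = 2 * G * (ρ / R) ^ K := by ring
  rw [← hsum.tsum_eq, ← hsum.summable.sum_add_tsum_nat_add K]
  refine norm_add_le_of_le ?_ htail
  refine (norm_sum_le_of_le _ fun j hj ↦ (hterm j).trans (hτ j (mem_range.mp hj))).trans_eq ?_
  simp

open scoped ComplexConjugate in
lemma iteratedDeriv_conj_conj (n : ℕ) (f : ℂ → ℂ) :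
    iteratedDeriv n (conj ∘ f ∘ conj) = conj ∘ iteratedDeriv n f ∘ conj := by
  induction n with
  | zero => simp
  | succ n ih => rw [iteratedDeriv_succ, ih, deriv_conj_conj, iteratedDeriv_succ]

open scoped ComplexConjugate in
lemma im_iteratedDeriv_eq_zero {f : ℂ → ℂ} (x : ℝ)
    (hf : ∀ᶠ w in nhds (x : ℂ), f (conj w) = conj (f w)) (n : ℕ) :
    (iteratedDeriv n f x).im = 0 := by
  have heq : conj ∘ f ∘ conj =ᶠ[nhds (x : ℂ)] f := by
    filter_upwards [hf] with w hw
    simp [hw]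
  rw [← Complex.conj_eq_iff_im]
  calc conj (iteratedDeriv n f x) = iteratedDeriv n (conj ∘ f ∘ conj) x := by
        simp [iteratedDeriv_conj_conj]
    _ = iteratedDeriv n f x := heq.iteratedDeriv_eq n

open scoped ComplexConjugate in
theorem exists_int_ne_zero_norm_sum_mul_le {E : Type*} [Fintype E] {f : E → ℂ → ℂ} {K B Z : ℕ}
    {R ρ G τ : ℝ} (hR : 0 < R) (hρ : 0 ≤ ρ) (hρR : ρ ≤ R / 2) (hτ : 0 < τ)
    (hf : ∀ e, DiffContOnCl ℂ (f e) (Metric.ball 0 R))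
    (hconj : ∀ e, ∀ w ∈ Metric.ball (0 : ℂ) R, f e (conj w) = conj (f e w))
    (hG : ∀ e, ∀ w ∈ Metric.sphere (0 : ℂ) R, ‖f e w‖ ≤ G)
    (hZ : Fintype.card E * (B * G) / τ ≤ Z)
    (hcard : (2 * Z + 1) ^ K < (B + 1) ^ Fintype.card E) :
    ∃ a : E → ℤ, a ≠ 0 ∧ (∀ e, |a e| ≤ B) ∧ ∀ w ∈ Metric.closedBall (0 : ℂ) ρ,
      ‖∑ e, a e * f e w‖ ≤ K * τ + 2 * (Fintype.card E * (B * G)) * (ρ / R) ^ K := by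
  let c (e : E) (j : Fin K) : ℝ := (j ! : ℝ)⁻¹ * ρ ^ (j : ℕ) * (iteratedDeriv j (f e) 0).re
  have hreal (e : E) (j : ℕ) : ((iteratedDeriv j (f e) 0).re : ℂ) = iteratedDeriv j (f e) 0 := by
    have hev : ∀ᶠ w in nhds ((0 : ℝ) : ℂ), f e (conj w) = conj (f e w) :=
      Filter.eventually_of_mem (Metric.ball_mem_nhds _ hR) (by simpa using hconj e)
    exact Complex.ext rfl (by simpa using (im_iteratedDeriv_eq_zero 0 hev j).symm)
  have hc (e : E) (j : Fin K) : |c e j| ≤ G := by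
    have hG0 : 0 ≤ G := (norm_nonneg _).trans (hG e R (by simp [abs_of_pos hR]))
    have hq : ρ / R ≤ 1 := by
      rw [div_le_one hR]
      linarith
    calc |c e j| = (j ! : ℝ)⁻¹ * ρ ^ (j : ℕ) * |(iteratedDeriv j (f e) 0).re| := by
          rw [abs_mul, abs_of_nonneg (by positivity)]
      _ ≤ (j ! : ℝ)⁻¹ * ρ ^ (j : ℕ) * ‖iteratedDeriv j (f e) 0‖ := by
          gcongr
          exact Complex.abs_re_le_norm _
      _ ≤ G * (ρ / R) ^ (j : ℕ) := inv_factorial_mul_norm_iteratedDeriv_le hR hρ (hf e) (hG e) j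
      _ ≤ G := mul_le_of_le_one_right hG0 (pow_le_one₀ (by positivity) hq)
  obtain ⟨a, ha0, haB, haτ⟩ := exists_int_ne_zero_abs_sum_mul_le hτ hc hZ (by simpa using hcard)
  refine ⟨a, ha0, haB, fun w hw ↦ ?_⟩
  have hsmooth (j : ℕ) (e : E) : ContDiffAt ℂ j (f e) 0 :=
    ((hf e).differentiableOn.analyticAt (Metric.ball_mem_nhds _ hR)).contDiffAt
  refine norm_le_of_norm_iteratedDeriv_le hR hρR
    (f := fun w ↦ ∑ e, a e * f e w) ?_ (fun z hz ↦ ?_) (fun j hj ↦ ?_) hw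
  · refine ⟨.fun_sum fun e _ ↦ (hf e).differentiableOn.const_mul _, ?_⟩
    exact continuousOn_finsetSum _ fun e _ ↦ (hf e).continuousOn.const_mul _
  · refine norm_sum_mul_le (fun e ↦ ?_) fun e ↦ hG e z hz
    rw [Complex.norm_intCast]
    exact_mod_cast haB e
  · have hderiv : iteratedDeriv j (fun w ↦ ∑ e, a e * f e w) 0 =
        ((∑ e, a e * (iteratedDeriv j (f e) 0).re : ℝ) : ℂ) := by
      rw [iteratedDeriv_fun_sum fun e _ ↦ contDiffAt_const.mul (hsmooth j e)]
      push_cast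
      exact sum_congr rfl fun e _ ↦ by rw [iteratedDeriv_const_mul_field, hreal]
    have hcoef : 0 ≤ (j ! : ℝ)⁻¹ * ρ ^ j := by positivity
    rw [hderiv, Complex.norm_real, Real.norm_eq_abs, ← abs_of_nonneg hcoef, ← abs_mul, mul_sum]
    refine (haτ ⟨j, hj⟩).trans_eq' (congrArg _ (sum_congr rfl fun e _ ↦ ?_))
    ring

end SiegelLemma

section ReversedRisingRoot

open scoped ComplexConjugate

/-- The function `((1 + w) ⋯ (1 + h w)) ^ (1 / r)`, holomorphic near `w = 0`. It expresses
`risingRoot r h` in the coordinate `w = 1 / z` at infinity. -/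
noncomputable def reversedRisingRoot (r h : ℕ) (w : ℂ) : ℂ :=
  ∏ j ∈ Icc 1 h, (1 + j * w) ^ (r : ℂ)⁻¹

variable {r h H : ℕ} {w : ℂ}

lemma re_one_add_natCast_mul_pos {j : ℕ} (hj : j ≤ H) (hw : ‖w‖ * H < 1) :
    0 < (1 + j * w).re := by
  have hjw : |(j * w).re| ≤ ‖w‖ * H := by
    refine (Complex.abs_re_le_norm _).trans ?_
    rw [norm_mul, Complex.norm_natCast, mul_comm]
    gcongr
  rw [Complex.add_re, Complex.one_re]
  linarith [(abs_le.mp hjw).1]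

lemma differentiableAt_reversedRisingRoot (hH : h ≤ H) (hw : ‖w‖ * H < 1) :
    DifferentiableAt ℂ (reversedRisingRoot r h) w := by
  refine DifferentiableAt.fun_finsetProd fun j hj ↦ ?_
  refine DifferentiableAt.cpow (by fun_prop) (by fun_prop) (Or.inl ?_)
  exact re_one_add_natCast_mul_pos ((mem_Icc.mp hj).2.trans hH) hw

lemma reversedRisingRoot_conj (hH : h ≤ H) (hw : ‖w‖ * H < 1) :
    reversedRisingRoot r h (conj w) = conj (reversedRisingRoot r h w) := by
  rw [reversedRisingRoot, reversedRisingRoot, map_prod]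
  refine prod_congr rfl fun j hj ↦ ?_
  have harg : (1 + j * w).arg ≠ Real.pi := (Complex.mem_slitPlane_iff_arg.mp
    (Or.inl (re_one_add_natCast_mul_pos ((mem_Icc.mp hj).2.trans hH) hw))).1
  simpa using Complex.conj_cpow (1 + j * w) (r : ℂ)⁻¹ harg

lemma norm_reversedRisingRoot_le (hr : r ≠ 0) (hH : h ≤ H) (hw : ‖w‖ * H < 1) :
    ‖reversedRisingRoot r h w‖ ≤ 2 ^ H := by
  have hr1 : (r : ℝ)⁻¹ ≤ 1 := inv_le_one_of_one_le₀ (by exact_mod_cast Nat.pos_of_ne_zero hr)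
  have hfactor : ∀ j ∈ Icc 1 h, ‖(1 + j * w) ^ (r : ℂ)⁻¹‖ ≤ 2 := by
    intro j hj
    have hbase : ‖1 + j * w‖ ≤ 2 := by
      have hjw : (j : ℝ) * ‖w‖ ≤ H * ‖w‖ := by
        gcongr
        exact (mem_Icc.mp hj).2.trans hH
      calc ‖1 + j * w‖ ≤ 1 + j * ‖w‖ := by simpa using norm_add_le 1 (j * w)
        _ ≤ 2 := by linarith
    have hcast : (r : ℂ)⁻¹ = ((r : ℝ)⁻¹ : ℝ) := by push_cast; rfl
    calc ‖(1 + j * w) ^ (r : ℂ)⁻¹‖ = ‖1 + j * w‖ ^ (r : ℝ)⁻¹ := by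
          rw [hcast, Complex.norm_cpow_real]
      _ ≤ 2 ^ (r : ℝ)⁻¹ := by gcongr
      _ ≤ 2 ^ (1 : ℝ) := Real.rpow_le_rpow_of_exponent_le one_le_two hr1
      _ = 2 := Real.rpow_one 2
  calc ‖reversedRisingRoot r h w‖ = ∏ j ∈ Icc 1 h, ‖(1 + j * w) ^ (r : ℂ)⁻¹‖ := norm_prod _ _
    _ ≤ ∏ _j ∈ Icc 1 h, (2 : ℝ) := prod_le_prod (fun _ _ ↦ norm_nonneg _) hfactor
    _ = 2 ^ h := by simp
    _ ≤ 2 ^ H := pow_le_pow_right₀ one_le_two hH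

lemma norm_pow_mul_reversedRisingRoot_le (hr : r ≠ 0) (hH0 : 0 < H) (hH : h ≤ H)
    (hw : ‖w‖ * H < 1) (d : ℕ) : ‖w ^ d * reversedRisingRoot r h w‖ ≤ 2 ^ H := by
  have hw1 : ‖w‖ ≤ 1 := by nlinarith [(by exact_mod_cast hH0 : (1 : ℝ) ≤ H), norm_nonneg w]
  rw [norm_mul, norm_pow]
  exact (mul_le_of_le_one_left (norm_nonneg _) (pow_le_one₀ (norm_nonneg _) hw1)).trans
    (norm_reversedRisingRoot_le hr hH hw)

lemma mul_cpow_of_re_pos {x y : ℂ} (hx : 0 < x.re) (hy : 0 < y.re) (c : ℂ) :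
    (x * y) ^ c = x ^ c * y ^ c := by
  have hx' := abs_lt.mp (Complex.abs_arg_lt_pi_div_two_iff.mpr (Or.inl hx))
  have hy' := abs_lt.mp (Complex.abs_arg_lt_pi_div_two_iff.mpr (Or.inl hy))
  have hx0 : x ≠ 0 := ne_of_apply_ne Complex.re (by simpa using hx.ne')
  have hy0 : y ≠ 0 := ne_of_apply_ne Complex.re (by simpa using hy.ne')
  have hlog : Complex.log (x * y) = Complex.log x + Complex.log y :=
    Complex.log_mul hx0 hy0 ⟨by linarith, by linarith⟩
  rw [Complex.cpow_def_of_ne_zero (mul_ne_zero hx0 hy0), Complex.cpow_def_of_ne_zero hx0,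
    Complex.cpow_def_of_ne_zero hy0, hlog, add_mul, Complex.exp_add]

lemma risingRoot_mul_eq_pow_mul_reversedRisingRoot (hr : r ≠ 0) (m : ℕ) {z : ℂ} (hz : 0 < z.re) :
    risingRoot r (r * m) z = z ^ m * reversedRisingRoot r (r * m) z⁻¹ := by
  have hz0 : z ≠ 0 := ne_of_apply_ne Complex.re (by simpa using hz.ne')
  have hinv : 0 < z⁻¹.re := by
    rw [Complex.inv_re]
    exact div_pos hz (Complex.normSq_pos.mpr hz0)
  have hfactor (j : ℕ) : (z + j) ^ (r : ℂ)⁻¹ = z ^ (r : ℂ)⁻¹ * (1 + j * z⁻¹) ^ (r : ℂ)⁻¹ := by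
    have hre : 0 < (1 + j * z⁻¹).re := by
      simpa using add_pos_of_pos_of_nonneg one_pos (mul_nonneg j.cast_nonneg hinv.le)
    rw [← mul_cpow_of_re_pos hz hre]
    congr 1
    field_simp
  simp only [risingRoot, reversedRisingRoot, hfactor, prod_mul_distrib, prod_const, Nat.card_Icc,
    add_tsub_cancel_right, pow_mul, Complex.cpow_nat_inv_pow _ hr]

end ReversedRisingRoot

section AuxiliaryForm

/-- The polynomial `∑ d, a d * X ^ (e - d)`, that is, `X ^ e` times the polynomial with
coefficients `a` in `1 / X`. -/
noncomputable def descendingPoly (e : ℕ) {D : ℕ} (a : Fin (D + 1) → ℤ) : ℤ[X] :=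
  ∑ d, C (a d) * X ^ (e - d : ℕ)

variable {e D : ℕ} (a : Fin (D + 1) → ℤ)

lemma natDegree_descendingPoly_le : (descendingPoly e a).natDegree ≤ e :=
  natDegree_sum_le_of_forall_le _ _ fun _ _ ↦ (natDegree_C_mul_X_pow_le _ _).trans (by lia)

lemma coeff_descendingPoly (hD : D ≤ e) (d : Fin (D + 1)) :
    (descendingPoly e a).coeff (e - d) = a d := by
  rw [descendingPoly, finsetSum_coeff, sum_eq_single d]
  · simp
  · intro b _ hb
    rw [coeff_C_mul_X_pow, if_neg (by lia)]
  · simp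

lemma aeval_descendingPoly (hD : D ≤ e) {z : ℂ} (hz : z ≠ 0) :
    aeval z (descendingPoly e a) = z ^ e * ∑ d, a d * z⁻¹ ^ (d : ℕ) := by
  rw [descendingPoly, map_sum, mul_sum]
  refine sum_congr rfl fun d _ ↦ ?_
  have hpow : z ^ (e - d : ℕ) = z ^ e * z⁻¹ ^ (d : ℕ) := by
    rw [pow_sub₀ _ hz (by lia), inv_pow]
  simp [hpow]
  ring

lemma aeval_descendingPoly_mul_risingRoot {r H m : ℕ} (hr : r ≠ 0) (hm : m ≤ H) {z : ℂ}
    (hz : 0 < z.re) :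
    aeval z (descendingPoly (D + H - m) a) * risingRoot r (r * m) z =
      z ^ (D + H) * ∑ d, a d * (z⁻¹ ^ (d : ℕ) * reversedRisingRoot r (r * m) z⁻¹) := by
  have hz0 : z ≠ 0 := ne_of_apply_ne Complex.re (by simpa using hz.ne')
  rw [aeval_descendingPoly a (by lia) hz0, risingRoot_mul_eq_pow_mul_reversedRisingRoot hr m hz,
    ← Nat.sub_add_cancel (by lia : m ≤ D + H), pow_add, Nat.sub_add_cancel (by lia)]
  simp only [← mul_assoc, ← sum_mul]
  ring

lemma norm_bounds_of_mem_closedBall {N n : ℕ} (hN : 0 < N) (hn : N ≤ n) (hn2 : n < 2 * N) {z : ℂ}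
    (hz : z ∈ Metric.closedBall (n : ℂ) (n / 2)) : ‖z‖ ≤ 3 * N ∧ ‖z⁻¹‖ ≤ 2 / N := by
  have hn' : (N : ℝ) ≤ n := by exact_mod_cast hn
  have hn2' : (n : ℝ) ≤ 2 * N := by exact_mod_cast hn2.le
  have hN' : (0 : ℝ) < N := by exact_mod_cast hN
  rw [mem_closedBall_iff_norm] at hz
  have hupper := norm_add_le (z - n) n
  have hlower := norm_sub_norm_le (n : ℂ) z
  rw [sub_add_cancel, Complex.norm_natCast] at hupper
  rw [norm_sub_rev, Complex.norm_natCast] at hlower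
  refine ⟨by linarith, ?_⟩
  rw [norm_inv, inv_le_comm₀ (by linarith) (by positivity), inv_div]
  linarith

open scoped ComplexConjugate in
theorem exists_int_ne_zero_norm_sum_mul_reversedRisingRoot_le {ι : Type*} [Fintype ι]
    {r H K B Z N : ℕ} {τ : ℝ} {m : ι → ℕ} (hr : r ≠ 0) (hH : 0 < H) (hm : ∀ l, r * m l ≤ H)
    (hN : 8 * H ≤ N) (hτ : 0 < τ)
    (hZ : (Fintype.card ι * (D + 1) : ℕ) * (B * 2 ^ H) / τ ≤ (Z : ℝ))
    (hcard : (2 * Z + 1) ^ K < (B + 1) ^ (Fintype.card ι * (D + 1))) :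
    ∃ a : ι × Fin (D + 1) → ℤ, a ≠ 0 ∧ (∀ e, |a e| ≤ B) ∧ ∀ w : ℂ, ‖w‖ ≤ 2 / N →
      ‖∑ e, a e * (w ^ (e.2 : ℕ) * reversedRisingRoot r (r * m e.1) w)‖ ≤
        K * τ + 2 * ((Fintype.card ι * (D + 1) : ℕ) * (B * 2 ^ H)) * (4 * H / N) ^ K := by
  have hH' : (0 : ℝ) < H := by exact_mod_cast hH
  have hN' : (8 : ℝ) * H ≤ N := by exact_mod_cast hN
  have hN0 : (0 : ℝ) < N := by linarith
  have hwH {w : ℂ} (hw : ‖w‖ ≤ 1 / (2 * H)) : ‖w‖ * H < 1 := by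
    rw [le_div_iff₀ (by positivity)] at hw
    linarith
  have hcard' : Fintype.card (ι × Fin (D + 1)) = Fintype.card ι * (D + 1) := by simp
  rw [← hcard'] at hZ hcard ⊢
  have hR : (2 / N : ℝ) ≤ 1 / (2 * H) / 2 := by
    field_simp
    linarith
  let f (e : ι × Fin (D + 1)) (w : ℂ) : ℂ := w ^ (e.2 : ℕ) * reversedRisingRoot r (r * m e.1) w
  have hf (e) : DiffContOnCl ℂ (f e) (Metric.ball 0 (1 / (2 * H))) := by
    refine DifferentiableOn.diffContOnCl fun w hw ↦ ?_
    have hw' := hwH (mem_closedBall_zero_iff.mp (Metric.closure_ball_subset_closedBall hw))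
    exact ((differentiableAt_id.pow _).mul
      (differentiableAt_reversedRisingRoot (hm e.1) hw')).differentiableWithinAt
  have hconj (e) : ∀ w ∈ Metric.ball (0 : ℂ) (1 / (2 * H)), f e (conj w) = conj (f e w) := by
    intro w hw
    simp only [f]
    rw [map_mul, map_pow, reversedRisingRoot_conj (hm e.1) (hwH (mem_ball_zero_iff.mp hw).le)]
  have hbound (e) : ∀ w ∈ Metric.sphere (0 : ℂ) (1 / (2 * H)), ‖f e w‖ ≤ 2 ^ H := fun w hw ↦
    norm_pow_mul_reversedRisingRoot_le hr hH (hm e.1) (hwH (mem_sphere_zero_iff_norm.mp hw).le) _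
  obtain ⟨a, ha0, haB, ha⟩ := exists_int_ne_zero_norm_sum_mul_le (by positivity) (by positivity)
    hR hτ hf hconj hbound hZ hcard
  refine ⟨a, ha0, haB, fun w hw ↦ ?_⟩
  have hquot : (4 * H / N : ℝ) = 2 / N / (1 / (2 * H)) := by
    field_simp
    ring
  rw [hquot]
  exact ha w (by simpa using hw)

theorem exists_ne_zero_norm_rootForm_zero_le {ι : Type*} [Fintype ι]
    {r H K B Z N : ℕ} {τ : ℝ} {m : ι → ℕ} (hr : r ≠ 0) (hH : 0 < H) (hm : ∀ l, r * m l ≤ H)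
    (hN : 8 * H ≤ N) (hτ : 0 < τ)
    (hZ : (Fintype.card ι * (D + 1) : ℕ) * (B * 2 ^ H) / τ ≤ (Z : ℝ))
    (hcard : (2 * Z + 1) ^ K < (B + 1) ^ (Fintype.card ι * (D + 1))) :
    ∃ A : ι → ℤ[X], A ≠ 0 ∧ (∀ l, (A l).natDegree ≤ D + H) ∧
      ∀ n, N ≤ n → n < 2 * N → ∀ z ∈ Metric.closedBall (n : ℂ) (n / 2),
        ‖rootForm r H (fun l ↦ r * m l) A 0 z‖ ≤ (3 * N) ^ (D + H) *
          (K * τ + 2 * ((Fintype.card ι * (D + 1) : ℕ) * (B * 2 ^ H)) * (4 * H / N) ^ K) ∧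
        ∀ l, ‖aeval z (A l) * risingRoot r (r * m l) z‖ ≤
          (3 * N) ^ (D + H) * ((D + 1 : ℕ) * (B * 2 ^ H)) := by
  have hmH (l : ι) : m l ≤ H := (Nat.le_mul_of_pos_left _ (Nat.pos_of_ne_zero hr)).trans (hm l)
  obtain ⟨a, ha0, haB, ha⟩ :=
    exists_int_ne_zero_norm_sum_mul_reversedRisingRoot_le hr hH hm hN hτ hZ hcard
  refine ⟨fun l ↦ descendingPoly (D + H - m l) fun d ↦ a (l, d), fun hA ↦ ha0 ?_,
    fun l ↦ (natDegree_descendingPoly_le _).trans (Nat.sub_le _ _), fun n hn hn2 z hz ↦ ?_⟩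
  · ext ⟨l, d⟩
    rw [← coeff_descendingPoly (fun d ↦ a (l, d)) (by have := hmH l; lia : D ≤ D + H - m l)]
    exact congrArg (coeff · _) (congrFun hA l)
  have hre : 0 < z.re := re_pos_of_mem_closedBall (by lia) hz
  have hterm (l : ι) := aeval_descendingPoly_mul_risingRoot (fun d ↦ a (l, d)) hr (hmH l) hre
  obtain ⟨hzN, hzinv⟩ := norm_bounds_of_mem_closedBall (by lia) hn hn2 hz
  constructor
  · have hform : rootForm r H (fun l ↦ r * m l)
        (fun l ↦ descendingPoly (D + H - m l) fun d ↦ a (l, d)) 0 z = z ^ (D + H) *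
          ∑ e, a e * (z⁻¹ ^ (e.2 : ℕ) * reversedRisingRoot r (r * m e.1) z⁻¹) := by
      rw [Fintype.sum_prod_type, mul_sum, rootForm]
      exact sum_congr rfl fun l _ ↦ hterm l
    rw [hform, norm_mul, norm_pow]
    gcongr
    exact ha _ hzinv
  · intro l
    rw [hterm, norm_mul, norm_pow]
    gcongr
    have hinvH : ‖z⁻¹‖ * H < 1 := by
      have hN' : (8 : ℝ) * H ≤ N := by exact_mod_cast hN
      have hH' : (0 : ℝ) < H := by exact_mod_cast hH
      calc ‖z⁻¹‖ * H ≤ 2 / N * H := by gcongr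
        _ < 1 := by
          rw [div_mul_eq_mul_div, div_lt_one (by linarith)]
          linarith
    refine (norm_sum_mul_le (B := B) (fun d ↦ ?_) fun d : Fin (D + 1) ↦
      norm_pow_mul_reversedRisingRoot_le hr hH (hm l) hinvH d).trans_eq (by simp)
    rw [Complex.norm_intCast]
    exact_mod_cast haB (l, d)

end AuxiliaryForm

section ParameterChoice

lemma mul_le_pow_of_two_mul_le {c f N : ℕ} (hc : 2 * c ≤ N) (hf : 1 ≤ f) : c * f ≤ N ^ f := by
  obtain rfl | hc0 := Nat.eq_zero_or_pos c
  · simp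
  induction f, hf using Nat.le_induction with
  | base => lia
  | succ f hf ih =>
    calc c * (f + 1) ≤ c * f * 2 := by nlinarith
      _ ≤ N ^ f * N := Nat.mul_le_mul ih (by lia)
      _ = N ^ (f + 1) := (pow_succ N f).symm

lemma abs_sum_mul_le_of_abs_sub_mul_le {ι : Type*} [Fintype ι] {t a x : ι → ℝ} {c X ε T : ℝ}
    (hc : 0 ≤ c) (hX : 0 < X) (hε : |∑ l, t l * a l| ≤ ε) (hT : ∀ l, |t l| * a l ≤ T)
    (hx : ∀ l, |x l - a l * X| ≤ c * a l / X) :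
    |∑ l, t l * x l| ≤ X * ε + Fintype.card ι * (c * T / X) := by
  have hsplit : ∑ l, t l * x l = X * ∑ l, t l * a l + ∑ l, t l * (x l - a l * X) := by
    rw [mul_sum, ← sum_add_distrib]
    exact sum_congr rfl fun l _ ↦ by ring
  have herror : ∀ l, |t l * (x l - a l * X)| ≤ c * T / X := fun l ↦ by
    calc |t l * (x l - a l * X)| ≤ |t l| * (c * a l / X) := by
          rw [abs_mul]
          gcongr
          exact hx l
      _ = c * (|t l| * a l) / X := by ring
      _ ≤ c * T / X := by
        gcongr
        exact hT l
  calc |∑ l, t l * x l| ≤ |X * ∑ l, t l * a l| + |∑ l, t l * (x l - a l * X)| :=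
        hsplit ▸ abs_add_le _ _
    _ ≤ X * ε + ∑ _l : ι, c * T / X := by
      rw [abs_mul, abs_of_pos hX]
      gcongr
      exact (abs_sum_le_sum_abs _ _).trans (sum_le_sum fun l _ ↦ herror l)
    _ = X * ε + Fintype.card ι * (c * T / X) := by simp

/-- The constraints under which a form in `28` roots `risingRoot r h`, `h ≤ H`, can be made small
together with its first `I` derivatives on `[N, 2 * N)`. All sizes are measured in powers of
`N ^ f`. -/
structure Admissible (r H N f I : ℕ) : Prop where
  two_le : 2 ≤ r
  le_N : r ≤ N
  H_pos : 0 < H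
  three_pow_le : 3 ^ 90 ≤ N
  four_mul_pow_le : (4 * H) ^ 30 ≤ N
  order_le : 2 * (I + 1) ≤ N
  mul_le : H * (I + 1) ≤ f

namespace Admissible

variable {r H N f I : ℕ} (hp : Admissible r H N f I)

include hp

lemma two_le_N : 2 ≤ N := le_trans (by norm_num) hp.three_pow_le

lemma H_le : H ≤ f := (Nat.le_mul_of_pos_right _ I.succ_pos).trans hp.mul_le

lemma mul_le_pow {c : ℕ} (hc : 2 * c ≤ 3 ^ 90) : c * f ≤ N ^ f :=
  mul_le_pow_of_two_mul_le (hc.trans hp.three_pow_le) (hp.H_pos.trans_le hp.H_le)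

lemma N_le_pow : N ≤ N ^ f := Nat.le_self_pow (hp.H_pos.trans_le hp.H_le).ne' N

lemma const_le_pow {c : ℕ} (hc : c ≤ 3 ^ 90) : (c : ℝ) ≤ N ^ f := by
  exact_mod_cast hc.trans (hp.three_pow_le.trans hp.N_le_pow)

lemma two_pow_le : 2 ^ H ≤ N ^ f :=
  (Nat.pow_le_pow_left hp.two_le_N H).trans
    (Nat.pow_le_pow_right (two_pos.trans_le hp.two_le_N) hp.H_le)

lemma three_mul_pow_le : (3 * N) ^ (80 * f + H) ≤ (N ^ f) ^ 82 := by
  have hN := hp.two_le_N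
  have hH := hp.H_le
  have hthree : 3 ^ (80 * f + H) ≤ N ^ f := by
    calc 3 ^ (80 * f + H) ≤ 3 ^ (90 * f) := Nat.pow_le_pow_right (by norm_num) (by lia)
      _ = (3 ^ 90) ^ f := pow_mul _ _ _
      _ ≤ N ^ f := Nat.pow_le_pow_left hp.three_pow_le _
  have hN81 : N ^ (80 * f + H) ≤ (N ^ f) ^ 81 := by
    rw [← pow_mul]
    exact Nat.pow_le_pow_right (by lia) (by lia)
  calc (3 * N) ^ (80 * f + H) = 3 ^ (80 * f + H) * N ^ (80 * f + H) := mul_pow _ _ _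
    _ ≤ N ^ f * (N ^ f) ^ 81 := Nat.mul_le_mul hthree hN81
    _ = (N ^ f) ^ 82 := by ring

lemma eight_mul_le : 8 * H ≤ N := by
  have hH := hp.H_pos
  calc 8 * H ≤ (4 * H) ^ 2 := by nlinarith
    _ ≤ (4 * H) ^ 30 := Nat.pow_le_pow_right (by lia) (by norm_num)
    _ ≤ N := hp.four_mul_pow_le

set_option exponentiation.threshold 300 in
lemma four_mul_div_pow_le : (4 * H / N : ℝ) ^ (300 * f) ≤ 1 / (N ^ f) ^ 290 := by
  have hN : (0 : ℝ) < N := by exact_mod_cast (by have := hp.two_le_N; lia : 0 < N)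
  have hH : (4 * H : ℝ) ^ 30 ≤ N := by exact_mod_cast hp.four_mul_pow_le
  have hbase : (4 * H / N : ℝ) ^ 30 ≤ 1 / N ^ 29 := by
    rw [div_pow, div_le_div_iff₀ (by positivity) (by positivity)]
    calc (4 * H : ℝ) ^ 30 * (N : ℝ) ^ 29 ≤ (N : ℝ) * (N : ℝ) ^ 29 := by gcongr
      _ = 1 * (N : ℝ) ^ 30 := by ring
  calc (4 * H / N : ℝ) ^ (300 * f) = ((4 * H / N : ℝ) ^ 30) ^ (10 * f) := by
        rw [← pow_mul]
        congr 1
        ring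
    _ ≤ (1 / N ^ 29) ^ (10 * f) := by gcongr
    _ = 1 / (N ^ f) ^ 290 := by
        rw [one_div_pow, ← pow_mul, ← pow_mul]
        congr 2
        ring

set_option exponentiation.threshold 300 in
lemma pigeonhole_count_lt : (2 * (N ^ f) ^ 284 + 1) ^ (300 * f) <
    ((N ^ f) ^ 40 + 1) ^ (28 * (80 * f + 1)) := by
  have hq : 3 ≤ N ^ f := le_trans (by norm_num) (hp.three_pow_le.trans hp.N_le_pow)
  generalize N ^ f = q at hq
  have hcell : 2 * q ^ 284 + 1 ≤ q ^ 285 := by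
    have : 1 ≤ q ^ 284 := Nat.one_le_pow _ _ (by lia)
    calc 2 * q ^ 284 + 1 ≤ 3 * q ^ 284 := by lia
      _ ≤ q * q ^ 284 := Nat.mul_le_mul_right _ hq
      _ = q ^ 285 := (pow_succ' q 284).symm
  calc (2 * q ^ 284 + 1) ^ (300 * f) ≤ (q ^ 285) ^ (300 * f) := Nat.pow_le_pow_left hcell _
    _ = q ^ (285 * (300 * f)) := (pow_mul _ _ _).symm
    _ ≤ q ^ (40 * (28 * (80 * f + 1))) := Nat.pow_le_pow_right (by lia) (by lia)
    _ = (q ^ 40) ^ (28 * (80 * f + 1)) := pow_mul _ _ _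
    _ < (q ^ 40 + 1) ^ (28 * (80 * f + 1)) := Nat.pow_lt_pow_left (Nat.lt_succ_self _) (by lia)

lemma derivative_loss_le {n i : ℕ} (hn : N ≤ n) (hn2 : n < 2 * N) (hi : i ≤ I) :
    (r * (2 * n) ^ H * i / (n / 2) : ℝ) ^ i ≤ (N ^ f) ^ 5 := by
  have hN := hp.two_le_N
  have hN4 : 4 ≤ N := le_trans (by norm_num) hp.three_pow_le
  have hI := hp.order_le
  have hH := hp.H_pos
  have hbase : r * (2 * n) ^ H * (2 * i) ≤ N ^ (2 * H + 2) := by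
    calc r * (2 * n) ^ H * (2 * i) ≤ N * (N ^ 2) ^ H * N := by
          gcongr
          · exact hp.le_N
          · nlinarith
          · lia
      _ = N ^ (2 * H + 2) := by ring
  have hexp : (2 * H + 2) * i ≤ f * 5 := by
    calc (2 * H + 2) * i ≤ 5 * H * (I + 1) := Nat.mul_le_mul (by lia) (by lia)
      _ ≤ f * 5 := by linarith [hp.mul_le]
  have hdiv : (r * (2 * n) ^ H * i / (n / 2) : ℝ) ≤ r * (2 * n) ^ H * (2 * i) := by
    have hn1 : (1 : ℝ) ≤ n := by exact_mod_cast (by lia : 1 ≤ n)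
    calc (r * (2 * n) ^ H * i / (n / 2) : ℝ) = r * (2 * n) ^ H * (2 * i) / n := by
          field_simp
      _ ≤ r * (2 * n) ^ H * (2 * i) := div_le_self (by positivity) hn1
  calc (r * (2 * n) ^ H * i / (n / 2) : ℝ) ^ i ≤ (r * (2 * n) ^ H * (2 * i)) ^ i := by gcongr
    _ ≤ (N ^ (2 * H + 2)) ^ i := by
      gcongr
      exact_mod_cast hbase
    _ = N ^ ((2 * H + 2) * i) := (pow_mul _ _ _).symm
    _ ≤ N ^ (f * 5) := pow_le_pow_right₀ (by exact_mod_cast (by lia : 1 ≤ N)) hexp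
    _ = (N ^ f) ^ 5 := pow_mul _ _ _

lemma coefficient_sum_le :
    (28 * (80 * f + 1) : ℕ) * ((N ^ f) ^ 40 * 2 ^ H) ≤ ((N ^ f) ^ 42 : ℝ) := by
  have hcount : 28 * (80 * f + 1) ≤ N ^ f := by
    have := hp.mul_le_pow (c := 28 * 81) (by norm_num)
    have := hp.H_pos.trans_le hp.H_le
    lia
  have hcount' : ((28 * (80 * f + 1) : ℕ) : ℝ) ≤ N ^ f := by exact_mod_cast hcount
  have htwo : (2 : ℝ) ^ H ≤ N ^ f := by exact_mod_cast hp.two_pow_le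
  calc (28 * (80 * f + 1) : ℕ) * ((N ^ f) ^ 40 * 2 ^ H : ℝ)
      ≤ N ^ f * ((N ^ f) ^ 40 * N ^ f) := by gcongr
    _ = (N ^ f) ^ 42 := by ring

set_option exponentiation.threshold 300 in
lemma pigeonhole_range_le :
    (28 * (80 * f + 1) : ℕ) * ((N ^ f) ^ 40 * 2 ^ H) / (1 / (N ^ f) ^ 240) ≤
      ((N ^ f) ^ 284 : ℝ) := by
  have hq : (2 : ℝ) ≤ N ^ f := by exact_mod_cast hp.const_le_pow (c := 2) (by norm_num)
  have hsum := hp.coefficient_sum_le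
  generalize (N ^ f : ℝ) = q at hq hsum
  calc (28 * (80 * f + 1) : ℕ) * (q ^ 40 * 2 ^ H) / (1 / q ^ 240)
      ≤ q ^ 42 * q ^ 240 := by
        rw [div_div_eq_mul_div, div_one]
        gcongr
    _ = q ^ 282 := by ring
    _ ≤ q ^ 284 := pow_le_pow_right₀ (by linarith) (by norm_num)

set_option exponentiation.threshold 300 in
lemma form_bound_le : (3 * N) ^ (80 * f + H) * ((300 * f : ℕ) * (1 / (N ^ f) ^ 240) +
    2 * ((28 * (80 * f + 1) : ℕ) * ((N ^ f) ^ 40 * 2 ^ H)) * (4 * H / N) ^ (300 * f)) ≤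
      (1 / (N ^ f) ^ 155 : ℝ) := by
  have hq : (3 : ℝ) ≤ N ^ f := by exact_mod_cast hp.const_le_pow (c := 3) (by norm_num)
  have hN : (3 * N : ℝ) ^ (80 * f + H) ≤ (N ^ f) ^ 82 := by exact_mod_cast hp.three_mul_pow_le
  have hK : ((300 * f : ℕ) : ℝ) ≤ N ^ f := by exact_mod_cast hp.mul_le_pow (by norm_num)
  have hsum := hp.coefficient_sum_le
  have hH := hp.four_mul_div_pow_le
  generalize (N ^ f : ℝ) = q at *
  have : 0 < q := by linarith
  calc (3 * N) ^ (80 * f + H) * ((300 * f : ℕ) * (1 / q ^ 240) +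
        2 * ((28 * (80 * f + 1) : ℕ) * (q ^ 40 * 2 ^ H)) * (4 * H / N) ^ (300 * f))
      ≤ q ^ 82 * (q * (1 / q ^ 240) + 2 * q ^ 42 * (1 / q ^ 290)) := by gcongr
    _ = 1 / q ^ 157 + 2 / q ^ 166 := by field_simp
    _ ≤ 1 / q ^ 157 + 2 / q ^ 157 := by
      gcongr
      · linarith
      · norm_num
    _ = 3 / q ^ 157 := by ring
    _ ≤ q ^ 2 / q ^ 157 := by
      gcongr
      nlinarith
    _ = 1 / q ^ 155 := by field_simp

lemma term_bound_le : (3 * N) ^ (80 * f + H) * ((80 * f + 1 : ℕ) * ((N ^ f) ^ 40 * 2 ^ H)) ≤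
    ((N ^ f) ^ 124 : ℝ) := by
  have hN : (3 * N : ℝ) ^ (80 * f + H) ≤ (N ^ f) ^ 82 := by exact_mod_cast hp.three_mul_pow_le
  have hsum := hp.coefficient_sum_le
  have hcount : ((80 * f + 1 : ℕ) : ℝ) ≤ (28 * (80 * f + 1) : ℕ) := by
    exact_mod_cast Nat.le_mul_of_pos_left _ (by norm_num)
  calc (3 * N : ℝ) ^ (80 * f + H) * ((80 * f + 1 : ℕ) * ((N ^ f) ^ 40 * 2 ^ H))
      ≤ (N ^ f : ℝ) ^ 82 * ((28 * (80 * f + 1) : ℕ) * ((N ^ f) ^ 40 * 2 ^ H) : ℝ) := by gcongr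
    _ ≤ (N ^ f : ℝ) ^ 82 * (N ^ f) ^ 42 := by gcongr
    _ = (N ^ f : ℝ) ^ 124 := by ring

theorem exists_small_rootForm {m : Fin 28 → ℕ} (hm : ∀ l, r * m l ≤ H) :
    ∃ A : Fin 28 → ℤ[X], A ≠ 0 ∧ (∀ l, (A l).natDegree ≤ 80 * f + H) ∧
      ∀ n, N ≤ n → n < 2 * N → ∀ i ≤ I,
        ‖rootForm r H (fun l ↦ r * m l) A i n‖ ≤ 1 / (N ^ f) ^ 150 ∧
        ∀ l, |((((rootTwist r H (r * m l) ^ i) (A l)).eval (n : ℤ) : ℤ) : ℝ)| *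
          factorialRoot r (r * m l) n ≤ (N ^ f) ^ 130 := by
  have hr : r ≠ 0 := (two_pos.trans_le hp.two_le).ne'
  have hN : 0 < N := two_pos.trans_le hp.two_le_N
  have : (0 : ℝ) < N ^ f := by positivity
  have h8 := hp.eight_mul_le
  obtain ⟨A, hA0, hAdeg, hA⟩ := exists_ne_zero_norm_rootForm_zero_le (D := 80 * f) (K := 300 * f)
    (B := (N ^ f) ^ 40) (Z := (N ^ f) ^ 284) (τ := 1 / (N ^ f) ^ 240) hr hp.H_pos hm
    h8 (by positivity) (by simpa using hp.pigeonhole_range_le)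
    (by simpa using hp.pigeonhole_count_lt)
  refine ⟨A, hA0, hAdeg, fun n hn hn2 i hi ↦ ?_⟩
  have hloss := hp.derivative_loss_le hn hn2 hi
  constructor
  · calc ‖rootForm r H (fun l ↦ r * m l) A i n‖
        ≤ 1 / (N ^ f) ^ 155 * (r * (2 * n) ^ H * i / (n / 2)) ^ i :=
          norm_rootForm_le hr hm (by lia) (by lia)
            (fun z hz ↦ (hA n hn hn2 z hz).1.trans (by simpa using hp.form_bound_le)) i
      _ ≤ 1 / (N ^ f) ^ 155 * (N ^ f) ^ 5 := by gcongr
      _ = 1 / (N ^ f) ^ 150 := by field_simp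
  · intro l
    have hterm := norm_rootForm_le hr (fun _ : Unit ↦ hm l) (by lia : 0 < n) (by lia)
      (A := fun _ ↦ A l) (M := (N ^ f) ^ 124) (fun z hz ↦ by
        simpa [rootForm] using ((hA n hn hn2 z hz).2 l).trans
          (by simpa using hp.term_bound_le)) i
    rw [rootForm_natCast, Complex.norm_real, Fintype.sum_unique, norm_mul, Real.norm_eq_abs,
      Real.norm_of_nonneg (zero_le_one.trans (one_le_factorialRoot r (r * m l) n))] at hterm
    calc _ ≤ (N ^ f : ℝ) ^ 124 * (r * (2 * n) ^ H * i / (n / 2)) ^ i := hterm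
      _ ≤ (N ^ f) ^ 124 * (N ^ f) ^ 5 := by gcongr
      _ = (N ^ f) ^ 129 := by ring
      _ ≤ (N ^ f) ^ 130 := pow_le_pow_right₀ (by simpa using hp.const_le_pow (c := 1)) (by norm_num)

set_option exponentiation.threshold 300 in
lemma sum_mul_eq_zero {c X : ℝ} (hc : 0 ≤ c) (hcN : 28 * c ≤ N) (hX : (N ^ f) ^ 132 ≤ X)
    (hX' : X ≤ (N ^ f) ^ 148) {t x : Fin 28 → ℤ} {a : Fin 28 → ℝ}
    (hform : |∑ l, t l * a l| ≤ 1 / (N ^ f) ^ 150)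
    (hterm : ∀ l, |(t l : ℝ)| * a l ≤ (N ^ f) ^ 130)
    (hx : ∀ l, |x l - a l * X| ≤ c * a l / X) : ∑ l, t l * x l = 0 := by
  have hq : (3 : ℝ) ≤ N ^ f := by exact_mod_cast hp.const_le_pow (c := 3) (by norm_num)
  have hcq : 28 * c ≤ N ^ f := hcN.trans (by exact_mod_cast hp.N_le_pow)
  generalize (N ^ f : ℝ) = q at *
  have : 0 < q := by linarith
  have hX0 : 0 < X := lt_of_lt_of_le (by positivity) hX
  have hsum : |∑ l, (t l * x l : ℝ)| < 1 := by
    calc |∑ l, (t l * x l : ℝ)| ≤ X * (1 / q ^ 150) + 28 * (c * q ^ 130 / X) := by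
          simpa using abs_sum_mul_le_of_abs_sub_mul_le hc hX0 hform hterm hx
      _ ≤ q ^ 148 * (1 / q ^ 150) + 28 * (c * q ^ 130 / q ^ 132) := by gcongr
      _ = (1 + 28 * c) / q ^ 2 := by field_simp
      _ ≤ (1 + q) / q ^ 2 := by gcongr
      _ < 1 := by
        rw [div_lt_one (by positivity)]
        nlinarith
  exact Int.abs_lt_one_iff.mp (by exact_mod_cast hsum)

theorem card_mul_le {m : Fin 28 → ℕ} (hinj : Function.Injective m) (hm : ∀ l, r * m l ≤ H)
    {c : ℝ} (hc : 0 ≤ c) (hcN : 28 * c ≤ N) {S : Finset ℕ} (hS : S ⊆ Ico N (2 * N))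
    {x : ℕ → Fin 28 → ℕ} {X : ℕ → ℝ} (hx0 : ∀ n ∈ S, ∀ l, 0 < x n l)
    (hX : ∀ n ∈ S, (N ^ f) ^ 132 ≤ X n ∧ X n ≤ (N ^ f) ^ 148)
    (hx : ∀ n ∈ S, ∀ l, |x n l - factorialRoot r (r * m l) n * X n| ≤
      c * factorialRoot r (r * m l) n / X n) :
    #S * (I + 1 - 28) ≤ 28 * (80 * f + H + 28 * H) := by
  obtain ⟨A, hA0, hAdeg, hA⟩ := hp.exists_small_rootForm hm
  have hshift : Function.Injective fun l ↦ r * m l :=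
    fun a b hab ↦ hinj (Nat.eq_of_mul_eq_mul_left (two_pos.trans_le hp.two_le) hab)
  simpa using card_mul_le_of_rootTwist_relations (v := fun n l ↦ (x n l : ℤ)) hp.two_le hshift hm
    hA0 hAdeg (fun n hn l ↦ by exact_mod_cast (hx0 n hn l).ne') fun n hn i hi ↦ by
      obtain ⟨hnN, hn2N⟩ := mem_Ico.mp (hS hn)
      obtain ⟨hform, hterm⟩ := hA n hnN hn2N i hi
      rw [rootForm_natCast, Complex.norm_real] at hform
      exact hp.sum_mul_eq_zero hc hcN (hX n hn).1 (hX n hn).2 hform hterm (hx n hn)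

end Admissible
end ParameterChoice

section DepressedPolynomial

lemma exists_abs_eval_sub_le {P : ℝ[X]} (hP : P.coeff (P.natDegree - 1) = 0) :
    ∃ C : ℝ, 0 ≤ C ∧ ∀ x : ℝ, 1 ≤ x →
      |P.eval x - P.leadingCoeff * x ^ P.natDegree| ≤ C * x ^ (P.natDegree - 2) := by
  refine ⟨∑ i ∈ range P.natDegree, |P.coeff i|, sum_nonneg fun _ _ ↦ abs_nonneg _,
    fun x hx ↦ ?_⟩
  rw [eval_eq_sum_range, sum_range_succ, coeff_natDegree, add_sub_cancel_right, sum_mul]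
  refine (abs_sum_le_sum_abs _ _).trans (sum_le_sum fun i hi ↦ ?_)
  obtain rfl | hi2 : i = P.natDegree - 1 ∨ i ≤ P.natDegree - 2 := by
    have := mem_range.mp hi
    lia
  · simp [hP]
  · rw [abs_mul, abs_of_nonneg (by positivity : 0 ≤ x ^ i)]
    gcongr

lemma abs_sub_mul_max_pow_le {y v : ℝ} (hy : 0 ≤ y) (hv : 0 ≤ v) (t : ℕ) :
    |y - v| * max y v ^ t ≤ |y ^ (t + 1) - v ^ (t + 1)| := by
  wlog h : v ≤ y generalizing y v
  · simpa only [abs_sub_comm, max_comm] using this hv hy (le_of_not_ge h)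
  have hpow : v * v ^ t ≤ v * y ^ t := by gcongr
  rw [max_eq_left h, abs_of_nonneg (sub_nonneg.mpr h)]
  calc (y - v) * y ^ t ≤ y ^ (t + 1) - v ^ (t + 1) := by
        rw [pow_succ', pow_succ']
        linarith
    _ ≤ |y ^ (t + 1) - v ^ (t + 1)| := le_abs_self _

variable {r : ℕ} {a C x p : ℝ}

lemma abs_sub_mul_max_le {y z D : ℝ} (hy : 0 < y) (hz : 0 ≤ z) {t : ℕ}
    (h : |y ^ (t + 2) - z ^ (t + 2)| ≤ D * max y z ^ t) : |y - z| * max y z ≤ D := by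
  refine le_of_mul_le_mul_right ?_ (pow_pos (lt_max_of_lt_left hy : 0 < max y z) t)
  calc |y - z| * max y z * max y z ^ t = |y - z| * max y z ^ (t + 1) := by ring
    _ ≤ D * max y z ^ t := (abs_sub_mul_max_pow_le hy.le hz (t + 1)).trans h

lemma abs_sub_mul_le_of_eq_pow_mul {y q α : ℝ} (hr : 2 ≤ r) (ha : 1 ≤ |a|) (hC : 0 ≤ C)
    (hx : 0 < x) (hy : 0 < y) (hα : 1 ≤ α) (hp : |p - a * x ^ r| ≤ C * x ^ (r - 2))
    (hq : |q - a * y ^ r| ≤ C * y ^ (r - 2)) (hpq : q = α ^ r * p) :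
    |y - α * x| ≤ 2 * C * α / x := by
  obtain ⟨t, rfl⟩ := Nat.exists_eq_add_of_le' hr
  rw [Nat.add_sub_cancel] at hp hq
  let M := max y (α * x)
  have hpow : |y ^ (t + 2) - (α * x) ^ (t + 2)| ≤ 2 * C * α ^ 2 * M ^ t := by
    calc |y ^ (t + 2) - (α * x) ^ (t + 2)|
        ≤ |a| * |y ^ (t + 2) - (α * x) ^ (t + 2)| := le_mul_of_one_le_left (abs_nonneg _) ha
      _ = |α ^ (t + 2) * (p - a * x ^ (t + 2)) - (q - a * y ^ (t + 2))| := by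
        rw [← abs_mul, hpq]
        ring_nf
      _ ≤ α ^ (t + 2) * |p - a * x ^ (t + 2)| + |q - a * y ^ (t + 2)| := by
        refine (abs_sub _ _).trans_eq ?_
        rw [abs_mul, abs_of_pos (by positivity : 0 < α ^ (t + 2))]
      _ ≤ α ^ (t + 2) * (C * x ^ t) + C * y ^ t := by gcongr
      _ = C * (α ^ 2 * (α * x) ^ t + 1 * y ^ t) := by ring
      _ ≤ C * (α ^ 2 * M ^ t + α ^ 2 * M ^ t) := by
        gcongr
        · exact le_max_right _ _
        · exact one_le_pow₀ hα
        · exact le_max_left _ _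
      _ = 2 * C * α ^ 2 * M ^ t := by ring
  have hα0 : 0 < α := by linarith
  rw [le_div_iff₀ hx]
  refine le_of_mul_le_mul_right ?_ hα0
  calc |y - α * x| * x * α = |y - α * x| * (α * x) := by ring
    _ ≤ |y - α * x| * M := by
      gcongr
      exact le_max_right _ _
    _ ≤ 2 * C * α ^ 2 := abs_sub_mul_max_le hy (by positivity) hpow
    _ = 2 * C * α * α := by ring

lemma abs_le_mul_pow (hC : 0 ≤ C) (hx : 1 ≤ x) (hp : |p - a * x ^ r| ≤ C * x ^ (r - 2)) :
    |p| ≤ (|a| + C) * x ^ r := by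
  calc |p| = |a * x ^ r + (p - a * x ^ r)| := by rw [add_sub_cancel]
    _ ≤ |a| * x ^ r + C * x ^ (r - 2) := by
      refine (abs_add_le _ _).trans (add_le_add (le_of_eq ?_) hp)
      rw [abs_mul, abs_of_nonneg (by positivity : 0 ≤ x ^ r)]
    _ ≤ |a| * x ^ r + C * x ^ r := by
      gcongr
      exact Nat.sub_le r 2
    _ = (|a| + C) * x ^ r := by ring

lemma pow_le_two_mul_abs_add (hr : 2 ≤ r) (ha : 1 ≤ |a|) (hC : 0 ≤ C) (hx : 0 ≤ x)
    (hp : |p - a * x ^ r| ≤ C * x ^ (r - 2)) : x ^ r ≤ 2 * |p| + (2 * C + 1) ^ r := by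
  obtain h | h := le_total x (2 * C + 1)
  · calc x ^ r ≤ (2 * C + 1) ^ r := by gcongr
      _ ≤ 2 * |p| + (2 * C + 1) ^ r := le_add_of_nonneg_left (by positivity)
  · have herror : 2 * (C * x ^ (r - 2)) ≤ x ^ r := by
      calc 2 * (C * x ^ (r - 2)) = 2 * C * x ^ (r - 2) := by ring
        _ ≤ x ^ 2 * x ^ (r - 2) := by
          gcongr
          nlinarith
        _ = x ^ r := by rw [← pow_add, Nat.add_sub_cancel' hr]
    have hmain : x ^ r ≤ |p| + C * x ^ (r - 2) := by
      calc x ^ r ≤ |a| * x ^ r := le_mul_of_one_le_left (by positivity) ha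
        _ = |p - (p - a * x ^ r)| := by
          rw [sub_sub_cancel, abs_mul, abs_of_nonneg (by positivity : 0 ≤ x ^ r)]
        _ ≤ |p| + C * x ^ (r - 2) := (abs_sub _ _).trans (by gcongr)
    have : 0 ≤ (2 * C + 1) ^ r := by positivity
    linarith

end DepressedPolynomial

section ApproximateFactorialRoot

/-- The values `x n`, `n ∈ S`, behave like constant multiples of the `r`-th roots of `n !`: in size
up to the factor `K`, and much more precisely in their ratios. This is all that the counting
argument retains of the equation `s * n ! = P (x n)`. -/
structure IsApproxFactorialRoot (r K : ℕ) (S : Finset ℕ) (x : ℕ → ℕ) : Prop where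
  pos : ∀ n ∈ S, 0 < x n
  factorial_le : ∀ n ∈ S, n ! ≤ K * x n ^ r
  pow_le : ∀ n ∈ S, x n ^ r ≤ K * (n !)
  abs_sub_le : ∀ n ∈ S, ∀ h, n + h ∈ S →
    |x (n + h) - factorialRoot r h n * x n| ≤ K * factorialRoot r h n / x n

theorem isApproxFactorialRoot_of_abs_sub_le {r K : ℕ} {a C s : ℝ} (hr : 2 ≤ r) (ha : 1 ≤ |a|)
    (hC : 0 ≤ C) (hs : 1 ≤ |s|) (hK₁ : |a| + C ≤ K) (hK₂ : 2 * |s| + (2 * C + 1) ^ r ≤ K)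
    (hK₃ : 2 * C ≤ K) {S : Finset ℕ} {x : ℕ → ℕ} (hx0 : ∀ n ∈ S, 0 < x n)
    (hx : ∀ n ∈ S, |s * (n ! : ℝ) - a * x n ^ r| ≤ C * x n ^ (r - 2)) :
    IsApproxFactorialRoot r K S x := by
  have hr0 : r ≠ 0 := by lia
  have hx1 : ∀ n ∈ S, (1 : ℝ) ≤ x n := fun n hn ↦ by exact_mod_cast hx0 n hn
  have habs (n : ℕ) : |s * n !| = |s| * n ! := by rw [abs_mul, Nat.abs_cast]
  refine ⟨hx0, fun n hn ↦ ?_, fun n hn ↦ ?_, fun n hn h hnh ↦ ?_⟩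
  · have hsize : (n ! : ℝ) ≤ K * x n ^ r := by
      calc (n ! : ℝ) ≤ |s| * n ! := le_mul_of_one_le_left (by positivity) hs
        _ ≤ (|a| + C) * x n ^ r := habs n ▸ abs_le_mul_pow hC (hx1 n hn) (hx n hn)
        _ ≤ K * x n ^ r := by gcongr
    exact_mod_cast hsize
  · have hfac : (1 : ℝ) ≤ n ! := by exact_mod_cast n.factorial_pos
    have hsize : (x n : ℝ) ^ r ≤ K * n ! := by
      calc (x n : ℝ) ^ r ≤ 2 * (|s| * n !) + (2 * C + 1) ^ r :=
            habs n ▸ pow_le_two_mul_abs_add hr ha hC (by positivity) (hx n hn)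
        _ ≤ 2 * (|s| * n !) + (2 * C + 1) ^ r * n ! := by
          gcongr
          exact le_mul_of_one_le_right (by positivity) hfac
        _ = (2 * |s| + (2 * C + 1) ^ r) * n ! := by ring
        _ ≤ K * n ! := by gcongr
    exact_mod_cast hsize
  · have hα := one_le_factorialRoot r h n
    have hratio : s * (n + h) ! = factorialRoot r h n ^ r * (s * n !) := by
      rw [← factorialRoot_pow_mul_factorial hr0 h n]
      ring
    calc |x (n + h) - factorialRoot r h n * x n| ≤ 2 * C * factorialRoot r h n / x n :=
          abs_sub_mul_le_of_eq_pow_mul hr ha hC (by linarith [hx1 n hn]) (by linarith [hx1 _ hnh])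
            hα (hx n hn) (hx _ hnh) hratio
      _ ≤ K * factorialRoot r h n / x n := by gcongr

theorem exists_isApproxFactorialRoot {P : ℤ[X]} (hr : 2 ≤ P.natDegree)
    (hP : P.coeff (P.natDegree - 1) = 0) {s : ℤ} (hs : s ≠ 0) :
    ∃ K : ℕ, ∀ {S : Finset ℕ} {x : ℕ → ℕ},
      (∀ n ∈ S, 0 < x n ∧ s * (n ! : ℤ) = P.eval (x n : ℤ)) →
        IsApproxFactorialRoot P.natDegree K S x := by
  let Q : ℝ[X] := P.map (Int.castRingHom ℝ)
  have hinj : Function.Injective (Int.castRingHom ℝ) := Int.cast_injective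
  have hdeg : Q.natDegree = P.natDegree := natDegree_map_eq_of_injective hinj P
  obtain ⟨C, hC, hQ⟩ := exists_abs_eval_sub_le (P := Q) (by rw [hdeg, coeff_map, hP, map_zero])
  rw [hdeg] at hQ
  have ha : 1 ≤ |Q.leadingCoeff| := by
    rw [leadingCoeff_map_of_injective hinj]
    have : P.leadingCoeff ≠ 0 := leadingCoeff_ne_zero.mpr (ne_zero_of_natDegree_gt hr)
    simpa using mod_cast Int.one_le_abs this
  obtain ⟨K, hK⟩ := exists_nat_ge
    (max (max (|Q.leadingCoeff| + C) (2 * |(s : ℝ)| + (2 * C + 1) ^ P.natDegree)) (2 * C))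
  obtain ⟨⟨hK₁, hK₂⟩, hK₃⟩ := by simpa only [max_le_iff] using hK
  refine ⟨K, fun {S x} hx ↦ isApproxFactorialRoot_of_abs_sub_le hr ha hC
    (by exact_mod_cast Int.one_le_abs hs) hK₁ hK₂ hK₃ (fun n hn ↦ (hx n hn).1) fun n hn ↦ ?_⟩
  have heval : Q.eval (x n : ℝ) = s * n ! := by
    rw [eval_natCast_map, ← (hx n hn).2]
    simp
  exact heval ▸ hQ (x n) (by exact_mod_cast (hx n hn).1)

end ApproximateFactorialRoot

section SizeWindow

lemma pow_self_le_three_pow_mul_factorial (n : ℕ) : n ^ n ≤ 3 ^ n * n ! := by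
  have hexp := Real.pow_div_factorial_le_exp (n : ℝ) n.cast_nonneg n
  rw [div_le_iff₀ (by positivity)] at hexp
  have hthree : Real.exp n ≤ 3 ^ n := by
    rw [← Real.exp_one_pow]
    gcongr
    linarith [Real.exp_one_lt_d9]
  have : (n : ℝ) ^ n ≤ 3 ^ n * n ! := hexp.trans (by gcongr)
  exact_mod_cast this

variable {r K N f n x : ℕ}

lemma three_pow_le_pow_mul (hN : 3 ^ 147 ≤ N) (hnf : n ≤ 147 * (r * f)) : 3 ^ n ≤ N ^ (r * f) :=
  calc 3 ^ n ≤ 3 ^ (147 * (r * f)) := Nat.pow_le_pow_right three_pos hnf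
    _ = (3 ^ 147) ^ (r * f) := pow_mul _ _ _
    _ ≤ N ^ (r * f) := Nat.pow_le_pow_left hN _

lemma pow_le_of_factorial_le (hrf : 0 < r * f) (hN : 3 ^ 147 ≤ N) (hK : K ≤ N) (hn : N ≤ n)
    (hfn : 140 * (r * f) ≤ n) (hnf : n ≤ 147 * (r * f)) (hx : n ! ≤ K * x ^ r) :
    (N ^ f) ^ 132 ≤ x := by
  have hN1 : 1 ≤ N := le_trans (Nat.one_le_pow _ _ three_pos) hN
  refine le_of_pow_le_pow_left₀ (Nat.pos_of_mul_pos_right hrf).ne' x.zero_le ?_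
  refine Nat.le_of_mul_le_mul_left ?_ (by positivity : 0 < N ^ (r * f + 1))
  calc N ^ (r * f + 1) * ((N ^ f) ^ 132) ^ r = N ^ (133 * (r * f) + 1) := by ring
    _ ≤ N ^ n := Nat.pow_le_pow_right hN1 (by lia)
    _ ≤ n ^ n := Nat.pow_le_pow_left hn n
    _ ≤ 3 ^ n * n ! := pow_self_le_three_pow_mul_factorial n
    _ ≤ N ^ (r * f) * (N * x ^ r) := Nat.mul_le_mul (three_pow_le_pow_mul hN hnf)
      (hx.trans (Nat.mul_le_mul_right _ hK))
    _ = N ^ (r * f + 1) * x ^ r := by ring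

lemma le_pow_of_pow_le (hr : 0 < r) (hN : 3 ^ 147 ≤ N) (hK : K ≤ N) (hn : n ≤ 3 * N)
    (hnf : n + 1 ≤ 147 * (r * f)) (hx : x ^ r ≤ K * n !) : x ≤ (N ^ f) ^ 148 := by
  have hN1 : 1 ≤ N := le_trans (Nat.one_le_pow _ _ three_pos) hN
  refine le_of_pow_le_pow_left₀ hr.ne' (Nat.zero_le _) ?_
  calc x ^ r ≤ N * (3 * N) ^ n := hx.trans
        (Nat.mul_le_mul hK (n.factorial_le_pow.trans (Nat.pow_le_pow_left hn n)))
    _ = 3 ^ n * N ^ (n + 1) := by ring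
    _ ≤ N ^ (r * f) * N ^ (147 * (r * f)) := Nat.mul_le_mul (three_pow_le_pow_mul hN (by lia))
      (Nat.pow_le_pow_right hN1 hnf)
    _ = ((N ^ f) ^ 148) ^ r := by ring

end SizeWindow

section CommonShifts

lemma exists_shifts_of_mul_lt_card {r W a L k : ℕ} (hr : 0 < r) (hW : 0 < W) {B : Finset ℕ}
    (hB : B ⊆ Ico a (a + L)) (hcard : (L / W + 1) * r * k < #B) :
    ∃ n ∈ B, ∃ m : Fin (k + 1) → ℕ, Function.Injective m ∧ (∀ l, r * m l < W) ∧
      ∀ l, n + r * m l ∈ B := by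
  have hmaps : ∀ n ∈ B, ((n - a) / W, n % r) ∈ range (L / W + 1) ×ˢ range r := fun n hn ↦ by
    obtain ⟨-, hnL⟩ := mem_Ico.mp (hB hn)
    rw [mem_product, mem_range, mem_range]
    exact ⟨Nat.lt_succ_of_le (Nat.div_le_div_right (by lia)), Nat.mod_lt _ hr⟩
  obtain ⟨⟨u, v⟩, -, hfiber⟩ :=
    exists_lt_card_fiber_of_mul_lt_card_of_maps_to hmaps (n := k) (by simpa using hcard)
  obtain ⟨T, hTfiber, hT⟩ := exists_subset_card_eq (Nat.succ_le_of_lt hfiber)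
  let g := T.orderEmbOfFin hT
  have hg (l : Fin (k + 1)) : g l ∈ B ∧ (g l - a) / W = u ∧ g l % r = v := by
    simpa using hTfiber (T.orderEmbOfFin_mem hT l)
  have hle (l : Fin (k + 1)) : g 0 ≤ g l := g.monotone (Fin.zero_le l)
  have hdiv (l : Fin (k + 1)) : r * ((g l - g 0) / r) = g l - g 0 :=
    Nat.mul_div_cancel' ((Nat.modEq_iff_dvd' (hle l)).mp ((hg 0).2.2.trans (hg l).2.2.symm))
  refine ⟨g 0, (hg 0).1, fun l ↦ (g l - g 0) / r, fun i j hij ↦ g.injective ?_,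
    fun l ↦ ?_, fun l ↦ ?_⟩
  · have hsub : g i - g 0 = g j - g 0 := by
      rw [← hdiv i, ← hdiv j]
      exact congrArg (r * ·) hij
    have := hle i
    have := hle j
    lia
  · rw [hdiv]
    have hl := Nat.lt_mul_div_succ (g l - a) hW
    have h0 := Nat.mul_div_le (g 0 - a) W
    rw [(hg l).2.1, mul_add] at hl
    rw [(hg 0).2.1] at h0
    have := (mem_Ico.mp (hB (hg 0).1)).1
    lia
  · rw [hdiv, Nat.add_sub_cancel' (hle l)]
    exact (hg l).1

lemma mul_lt_mul_add_of_mul_sub_div_eq {c n n' N : ℕ} (hN : 0 < N) (hn : N ≤ n) (hn' : N ≤ n')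
    (h : c * (n - N) / N = c * (n' - N) / N) : c * n < c * n' + N := by
  obtain ⟨a, rfl⟩ := Nat.exists_eq_add_of_le hn
  obtain ⟨b, rfl⟩ := Nat.exists_eq_add_of_le hn'
  simp only [Nat.add_sub_cancel_left] at h
  have hab : c * a < c * b + N := by
    calc c * a < N * (c * a / N + 1) := Nat.lt_mul_div_succ _ hN
      _ = N * (c * b / N) + N := by rw [h, mul_add_one]
      _ ≤ c * b + N := Nat.add_le_add_right (Nat.mul_div_le _ _) N
  rw [mul_add, mul_add]
  lia

theorem exists_common_shifts {r W N k c M : ℕ} (hr : 0 < r) (hW : 0 < W) (hc : 0 < c)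
    {G : Finset ℕ} (hG : G ⊆ Ico N (2 * N))
    (hcard : W ^ (k + 1) * c * M + (N / W + 1) * r * k < #G) :
    ∃ m : Fin (k + 1) → ℕ, Function.Injective m ∧ (∀ l, r * m l < W) ∧ ∃ S ⊆ G, M < #S ∧
      (∀ n ∈ S, ∀ l, n + r * m l ∈ G) ∧ ∀ n ∈ S, ∀ n' ∈ S, c * n < c * n' + N := by
  let good (n : ℕ) : Prop := ∃ m : Fin (k + 1) → ℕ, Function.Injective m ∧
    (∀ l, r * m l < W) ∧ ∀ l, n + r * m l ∈ G
  have hbad : #{n ∈ G | ¬ good n} ≤ (N / W + 1) * r * k := by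
    by_contra! hlt
    obtain ⟨n, hn, m, hinj, hmW, hmB⟩ := exists_shifts_of_mul_lt_card hr hW
      ((filter_subset _ _).trans (two_mul N ▸ hG)) hlt
    exact (mem_filter.mp hn).2 ⟨m, hinj, hmW, fun l ↦ filter_subset _ _ (hmB l)⟩
  have hgood : W ^ (k + 1) * c * M < #{n ∈ G | good n} := by
    have := card_filter_add_card_filter_not (s := G) good
    lia
  have hshift : ∀ n ∈ {n ∈ G | good n}, good n := fun n hn ↦ (mem_filter.mp hn).2
  choose! m hinj hmW hmG using hshift
  have hmaps : ∀ n ∈ {n ∈ G | good n}, (m n, c * (n - N) / N) ∈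
      Fintype.piFinset (fun _ : Fin (k + 1) ↦ range W) ×ˢ range c := fun n hn ↦ by
    obtain ⟨-, hn2N⟩ := mem_Ico.mp (hG (filter_subset _ _ hn))
    rw [mem_product, Fintype.mem_piFinset, mem_range, Nat.div_lt_iff_lt_mul (by lia)]
    exact ⟨fun l ↦ mem_range.mpr ((Nat.le_mul_of_pos_left _ hr).trans_lt (hmW n hn l)),
      Nat.mul_lt_mul_of_pos_left (by lia) hc⟩
  obtain ⟨⟨m₀, u⟩, -, hfiber⟩ :=
    exists_lt_card_fiber_of_mul_lt_card_of_maps_to hmaps (n := M) (by simpa using hgood)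
  set S := {n ∈ {n ∈ G | good n} | (m n, c * (n - N) / N) = (m₀, u)} with hS
  have hmem : ∀ n ∈ S, n ∈ {n ∈ G | good n} ∧ m n = m₀ ∧ c * (n - N) / N = u := fun n hn ↦ by
    simpa only [hS, mem_filter, Prod.mk.injEq] using hn
  obtain ⟨n₀, hn₀⟩ := card_pos.mp (M.zero_le.trans_lt hfiber)
  obtain ⟨hn₀G, rfl, -⟩ := hmem n₀ hn₀
  refine ⟨m n₀, hinj n₀ hn₀G, hmW n₀ hn₀G, S, (filter_subset _ _).trans (filter_subset _ _),
    hfiber, fun n hn ↦ (hmem n hn).2.1 ▸ hmG n (hmem n hn).1, fun n hn n' hn' ↦ ?_⟩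
  have hN := mem_Ico.mp (hG (filter_subset _ _ (hmem n hn).1))
  have hN' := mem_Ico.mp (hG (filter_subset _ _ (hmem n' hn').1))
  exact mul_lt_mul_add_of_mul_sub_div_eq (by lia) hN.1 hN'.1
    ((hmem n hn).2.2.trans (hmem n' hn').2.2.symm)

end CommonShifts

section Counting

variable {r K w N f : ℕ} {G : Finset ℕ} {x : ℕ → ℕ}

lemma three_pow_le_of_pow_le (hw : 2 ^ 40 ≤ w) (hwN : w ^ 34 ≤ N) : 3 ^ 147 ≤ N :=
  calc 3 ^ 147 ≤ (2 ^ 40) ^ 34 := by norm_num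
    _ ≤ w ^ 34 := Nat.pow_le_pow_left hw 34
    _ ≤ N := hwN

lemma admissible_of_pow_le (hr : 2 ≤ r) (hrw : 140 * r * 2 ^ 40 ≤ w) (hwN : w ^ 34 ≤ N)
    (hNf : N < 140 * r * (f + 1)) : Admissible r w N f (2 ^ 39 * w ^ 29 + 27) := by
  have hw0 : 0 < w := by lia
  have horder : 2 ^ 39 * w ^ 29 + 27 + 1 ≤ 2 ^ 40 * w ^ 29 := by
    have : 1 ≤ w ^ 29 := Nat.one_le_pow _ _ hw0
    lia
  refine ⟨hr, ?_, hw0, ?_, ?_, ?_, ?_⟩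
  · calc r ≤ w := by lia
      _ ≤ w ^ 34 := Nat.le_self_pow (by norm_num) w
      _ ≤ N := hwN
  · exact (Nat.pow_le_pow_right three_pos (by norm_num)).trans
      (three_pow_le_of_pow_le (by lia) hwN)
  · calc (4 * w) ^ 30 = 2 ^ 60 * w ^ 30 := by ring
      _ ≤ w ^ 4 * w ^ 30 := by
        refine Nat.mul_le_mul_right _ ?_
        calc 2 ^ 60 = (2 ^ 15) ^ 4 := by norm_num
          _ ≤ w ^ 4 := Nat.pow_le_pow_left (by lia) 4
      _ = w ^ 34 := by ring
      _ ≤ N := hwN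
  · calc 2 * (2 ^ 39 * w ^ 29 + 27 + 1) ≤ 2 * (2 ^ 40 * w ^ 29) := by gcongr
      _ = 2 ^ 41 * w ^ 29 := by ring
      _ ≤ w ^ 5 * w ^ 29 := by
        refine Nat.mul_le_mul_right _ ?_
        calc 2 ^ 41 ≤ w := by lia
          _ ≤ w ^ 5 := Nat.le_self_pow (by norm_num) w
      _ = w ^ 34 := by ring
      _ ≤ N := hwN
  · refine Nat.lt_succ_iff.mp (Nat.lt_of_mul_lt_mul_left (a := 140 * r) (lt_of_le_of_lt ?_ hNf))
    calc 140 * r * (w * (2 ^ 39 * w ^ 29 + 27 + 1)) ≤ 140 * r * (w * (2 ^ 40 * w ^ 29)) := by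
          gcongr
      _ = 140 * r * 2 ^ 40 * w ^ 30 := by ring
      _ ≤ w ^ 4 * w ^ 30 := by
        gcongr
        exact hrw.trans (Nat.le_self_pow (by norm_num) w)
      _ = w ^ 34 := by ring
      _ ≤ N := hwN

lemma IsApproxFactorialRoot.pow_le_and_le_pow (hx : IsApproxFactorialRoot r K G x) (hr : 0 < r)
    (hN : 3 ^ 147 ≤ N) (hK : K ≤ N) (hf : 73 ≤ f) {n n₀ : ℕ} (hn : n ∈ G) (hNn₀ : N ≤ n₀)
    (hn₀n : n₀ ≤ n) (hn2N : n < 2 * N) (hfn₀ : 140 * r * f ≤ n₀) (hn₀f : n₀ < 140 * r * (f + 1))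
    (hnn₀ : 28 * n < 28 * n₀ + N) : (N ^ f) ^ 132 ≤ x n ∧ x n ≤ (N ^ f) ^ 148 := by
  have hnf : n + 1 ≤ 147 * (r * f) := by nlinarith
  exact ⟨pow_le_of_factorial_le (by positivity) hN hK (by lia) (by lia) (by lia)
    (hx.factorial_le n hn), le_pow_of_pow_le hr hN hK (by lia) hnf (hx.pow_le n hn)⟩

theorem IsApproxFactorialRoot.card_le_of_common_shifts (hx : IsApproxFactorialRoot r K G x)
    (hr : 2 ≤ r) (hG : G ⊆ Ico N (2 * N)) (hrw : 140 * r * 2 ^ 40 ≤ w) (hKw : 28 * K ≤ w)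
    (hwN : w ^ 34 ≤ N) (hNw : N ≤ (2 * w) ^ 34) {m : Fin 28 → ℕ} (hinj : Function.Injective m)
    (hm : ∀ l, r * m l < w) {S : Finset ℕ} (hSG : S ⊆ G) (hshift : ∀ n ∈ S, ∀ l, n + r * m l ∈ G)
    (hshort : ∀ n ∈ S, ∀ n' ∈ S, 28 * n < 28 * n' + N) : #S ≤ w ^ 5 := by
  obtain rfl | hS := S.eq_empty_or_nonempty
  · simp
  have hwle : w ≤ N := (Nat.le_self_pow (by norm_num) w).trans hwN
  have hbounds (n : ℕ) (hn : n ∈ S) : N ≤ n ∧ n < 2 * N := mem_Ico.mp (hG (hSG hn))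
  obtain ⟨n₀, hn₀, hmin⟩ := S.exists_min_image id hS
  obtain ⟨hNn₀, hn₀N⟩ := hbounds n₀ hn₀
  obtain ⟨f, hfn₀, hn₀f⟩ : ∃ f, 140 * r * f ≤ n₀ ∧ n₀ < 140 * r * (f + 1) :=
    ⟨n₀ / (140 * r), Nat.mul_div_le _ _, Nat.lt_mul_div_succ _ (by lia)⟩
  have hp := admissible_of_pow_le hr hrw hwN (hNn₀.trans_lt hn₀f)
  have hwf : w ≤ f := hp.H_le
  have hN : 3 ^ 147 ≤ N := three_pow_le_of_pow_le (by lia) hwN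
  have hsize : ∀ n ∈ S, (N ^ f) ^ 132 ≤ x n ∧ x n ≤ (N ^ f) ^ 148 := fun n hn ↦
    hx.pow_le_and_le_pow (two_pos.trans_le hr) hN (by lia) (by lia) (hSG hn) hNn₀ (hmin n hn)
      (hbounds n hn).2 hfn₀ hn₀f (hshort n hn n₀ hn₀)
  have hcard : #S * (2 ^ 39 * w ^ 29) ≤ 28 * (80 * f + w + 28 * w) := by
    simpa using hp.card_mul_le (c := K) (x := fun n l ↦ x (n + r * m l)) (X := fun n ↦ x n) hinj
      (fun l ↦ (hm l).le) K.cast_nonneg (by exact_mod_cast hKw.trans hwle) (hSG.trans hG)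
      (fun n hn l ↦ hx.pos _ (hshift n hn l)) (fun n hn ↦ by exact_mod_cast hsize n hn)
      (fun n hn l ↦ hx.abs_sub_le n (hSG hn) _ (hshift n hn l))
  have hf : 280 * f ≤ n₀ := le_trans (by gcongr; lia) hfn₀
  have hw : 0 < w := by lia
  refine Nat.le_of_mul_le_mul_right ?_ (by positivity : 0 < 2 ^ 39 * w ^ 29)
  calc #S * (2 ^ 39 * w ^ 29) ≤ 28 * (80 * f + w + 28 * w) := hcard
    _ ≤ 32 * N := by lia
    _ ≤ 32 * (2 * w) ^ 34 := by gcongr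
    _ = w ^ 5 * (2 ^ 39 * w ^ 29) := by ring

theorem IsApproxFactorialRoot.card_le (hx : IsApproxFactorialRoot r K G x) (hr : 2 ≤ r)
    (hG : G ⊆ Ico N (2 * N)) (hrw : 140 * r * 2 ^ 40 ≤ w) (hKw : 28 * K ≤ w)
    (hwN : w ^ 34 ≤ N) (hNw : N ≤ (2 * w) ^ 34) :
    #G ≤ (28 + (2 ^ 34 + 1) * r * 27) * w ^ 33 := by
  have hw : 0 < w := by lia
  have hdiv : N / w + 1 ≤ (2 ^ 34 + 1) * w ^ 33 := by
    have hdiv' : N / w ≤ 2 ^ 34 * w ^ 33 :=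
      Nat.div_le_of_le_mul (hNw.trans_eq (by ring))
    have : 1 ≤ w ^ 33 := Nat.one_le_pow _ _ hw
    lia
  by_contra! hlt
  have hcard : w ^ (27 + 1) * 28 * w ^ 5 + (N / w + 1) * r * 27 < #G := by
    calc w ^ (27 + 1) * 28 * w ^ 5 + (N / w + 1) * r * 27
        ≤ w ^ (27 + 1) * 28 * w ^ 5 + (2 ^ 34 + 1) * w ^ 33 * r * 27 := by gcongr
      _ = (28 + (2 ^ 34 + 1) * r * 27) * w ^ 33 := by ring
      _ < #G := hlt
  obtain ⟨m, hinj, hm, S, hSG, hS, hshift, hshort⟩ :=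
    exists_common_shifts (by lia) hw (by norm_num) hG hcard
  exact hS.not_ge
    (hx.card_le_of_common_shifts hr hG hrw hKw hwN hNw hinj hm hSG hshift hshort)

theorem IsApproxFactorialRoot.card_le_mul_rpow (hx : IsApproxFactorialRoot r K G x) (hr : 2 ≤ r)
    (hG : G ⊆ Ico N (2 * N)) (hN : (140 * r * 2 ^ 40 + 28 * K) ^ 34 ≤ N) :
    (#G : ℝ) ≤ (28 + (2 ^ 34 + 1) * r * 27 : ℕ) * (N : ℝ) ^ ((33 : ℝ) / 34) := by
  set w := Nat.nthRoot 34 N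
  have hle : 140 * r * 2 ^ 40 + 28 * K ≤ w := (Nat.le_nthRoot_iff (by norm_num)).mpr hN
  have hwN : w ^ 34 ≤ N := Nat.pow_nthRoot_le (.inl (by norm_num))
  have hNw : N ≤ (2 * w) ^ 34 := by
    calc N ≤ (w + 1) ^ 34 := (Nat.lt_pow_nthRoot_add_one (by norm_num) N).le
      _ ≤ (2 * w) ^ 34 := Nat.pow_le_pow_left (by lia) 34
  have hrpow : (w : ℝ) ^ 33 ≤ (N : ℝ) ^ ((33 : ℝ) / 34) := by
    calc (w : ℝ) ^ 33 = ((w : ℝ) ^ 34) ^ ((33 : ℝ) / 34) := by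
          rw [← Real.rpow_natCast_mul w.cast_nonneg, ← Real.rpow_natCast]
          norm_num
      _ ≤ (N : ℝ) ^ ((33 : ℝ) / 34) := by
        gcongr
        exact_mod_cast hwN
  calc (#G : ℝ) ≤ (28 + (2 ^ 34 + 1) * r * 27 : ℕ) * (w : ℝ) ^ 33 := by
        exact_mod_cast hx.card_le hr hG (by lia) (by lia) hwN hNw
    _ ≤ (28 + (2 ^ 34 + 1) * r * 27 : ℕ) * (N : ℝ) ^ ((33 : ℝ) / 34) := by gcongr

end Counting

end PolynomialFactorial

/-- **Power saving for depressed polynomials** (Proposition 3.1).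
Let `P` be a polynomial with integer coefficients of degree `r ≥ 2` whose coefficient of
`x^(r−1)` is zero, and let `s` be a nonzero integer. Then there exist a positive constant `C`
and a threshold `N₀`, depending only on `P` and `s`, such that for all integers `N ≥ N₀`, the
number of integers `n` with `N ≤ n < 2N` for which there exists a positive integer `x` with
`s·n! = P(x)` is at most `C·N^(33/34)`. -/
theorem polynomial_factorial_power_saving_depressed
    (P : Polynomial ℤ) (r : ℕ) (hr : 2 ≤ r) (hdeg : P.natDegree = r)
    (hcoeff : P.coeff (r - 1) = 0) (s : ℤ) (hs : s ≠ 0) :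
    ∃ C : ℝ, 0 < C ∧ ∃ N₀ : ℕ, ∀ N : ℕ, N₀ ≤ N →
      (((Finset.Ico N (2 * N)).filter
          (fun n => ∃ x : ℕ, 0 < x ∧ s * (n ! : ℤ) = P.eval (x : ℤ))).card : ℝ)
        ≤ C * (N : ℝ) ^ ((33 : ℝ) / 34) := by
  subst hdeg
  obtain ⟨K, hK⟩ := PolynomialFactorial.exists_isApproxFactorialRoot hr hcoeff hs
  refine ⟨(28 + (2 ^ 34 + 1) * P.natDegree * 27 : ℕ), by positivity,
    (140 * P.natDegree * 2 ^ 40 + 28 * K) ^ 34, fun N hN ↦ ?_⟩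
  have hsol : ∀ n ∈ (Finset.Ico N (2 * N)).filter
      (fun n ↦ ∃ x : ℕ, 0 < x ∧ s * (n ! : ℤ) = P.eval (x : ℤ)),
      ∃ x : ℕ, 0 < x ∧ s * (n ! : ℤ) = P.eval (x : ℤ) := fun n hn ↦ (Finset.mem_filter.mp hn).2
  choose! x hx using hsol
  exact (hK hx).card_le_mul_rpow hr (Finset.filter_subset _ _) hN
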